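/- Let 0 < p ≤ 1, let δ > n/p − (n+1)/2, and let w ∈ A_1. Suppose that δ − (n−1)/2 is not a positive integer. Then there exists a constant C > 0, independent of f and of R, such that for every 0 < R < ∞ and every f in the weighted weak Hardy space WH^p_w(R^n) one has ‖T^δ_R f‖_{WH^p_w} ≤ C ‖f‖_{WH^p_w}. -/

import Mathlib

/-!
The grand maximal function `G` of `T_R f` is bounded pointwise by an `L^q`-maximal function of
`G f`, for some `q < p`; no atomic decomposition of `f` is used.

*The kernel.* Slicing the multiplier orthogonally to `x` shows that the kernel `K` of `T_1` at `x`
is a constant multiple of `∫_{-1}^1 (1 - s²)^μ cos(2π|x|s) ds` with `μ = δ + (n-1)/2`. As a function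
of `r = |x|` this integral satisfies Bessel's equation, and multiplied by `r^(μ+1)` it has an energy
comparable to a positive constant for `r ≥ 1`. Hence `|K(x)| ≤ C (1 + |x|)^(-a)` with
`a = δ + (n+1)/2`, and the averages of `|K|` over translates of a fixed compact set of positive
measure are bounded below by the same power. By the lower bound, unless `T_R f = 0` almost
everywhere, `f` is integrable against `(1 + |y|)^(-a)`, and Fubini's theorem applies to all
convolutions involved.

*The pointwise estimate.* The hypothesis on `δ` says `a > n/p`, and `q_w ≥ 1` gives
`N + n + 1 > n/p`, so there are `b ≤ min a (N + n + 1)` and `q < p` with `n/b < q`. Put `τ = 1/R`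
and let `φ` be a test function. If `t ≥ τ`, then `φ_t * T_R f = K_τ * (φ_t * f)`. If `t < τ`, then
`T_R f = K_τ * (η_τ * f)` for a Schwartz function `η` whose Fourier transform is `1` on the unit
ball, and `|φ_t| * |K_τ|` obeys the bound `C τ⁻ⁿ (1 + |y|/τ)^(-b)`, as `K_τ` does. In both cases a
function `F` controlled by `G f` on a ball of radius at least `τ` is averaged against this majorant.
Writing `F = F^q F^(1-q)`, estimating the second factor pointwise by `M((G f)^q)` and averaging the
first one yields `G(T_R f) ≤ C M((G f)^q)^(1/q)`.

*The maximal function.* For `w ∈ A₁`, Vitali's covering lemma gives the weak type `(1,1)` of `M`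
with respect to `w`, and a layer-cake argument then shows that `g ↦ M(g^q)^(1/q)` is bounded on
weighted weak `L^p` for `q < p`.
-/

open MeasureTheory Real Complex Set
open scoped ENNReal NNReal FourierTransform

noncomputable section

/-- Euclidean space `ℝⁿ`. -/
abbrev Euc (n : ℕ) := EuclideanSpace ℝ (Fin n)

/-- The axis-parallel closed cube centered at `x₀` with side length `r`. -/
def cube {n : ℕ} (x₀ : Euc n) (r : ℝ) : Set (Euc n) :=
  {y | ∀ i, |y i - x₀ i| ≤ r / 2}

/-- The weighted measure `w(E) = ∫_E w(x) dx`. -/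
def wMeasure {n : ℕ} (w : Euc n → ℝ) : Measure (Euc n) :=
  (volume : Measure (Euc n)).withDensity fun x => ENNReal.ofReal (w x)

/-- The Muckenhoupt class `A₁`: `w` is nonnegative, locally integrable, and the average of `w`
over any cube is dominated by a constant times the essential infimum of `w` over that cube. -/
def IsA1 {n : ℕ} (w : Euc n → ℝ) : Prop :=
  (∀ x, 0 ≤ w x) ∧ LocallyIntegrable w volume ∧
    ∃ C : ℝ, 0 < C ∧ ∀ (x₀ : Euc n) (r : ℝ), 0 < r →
      (∫ x in cube x₀ r, w x) / r ^ n ≤ C * essInf w (volume.restrict (cube x₀ r))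

/-- The Muckenhoupt class `A_q`, `1 < q < ∞`. -/
def IsAq {n : ℕ} (w : Euc n → ℝ) (q : ℝ) : Prop :=
  (∀ x, 0 ≤ w x) ∧ LocallyIntegrable w volume ∧
    ∃ C : ℝ, 0 < C ∧ ∀ (x₀ : Euc n) (r : ℝ), 0 < r →
      ((∫ x in cube x₀ r, w x) / r ^ n) *
        ((∫ x in cube x₀ r, w x ^ (-1 / (q - 1))) / r ^ n) ^ (q - 1) ≤ C

/-- The critical index `q_w = inf {q > 1 : w ∈ A_q}` of a weight `w`. -/
def criticalIndex {n : ℕ} (w : Euc n → ℝ) : ℝ :=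
  sInf {q : ℝ | 1 < q ∧ IsAq w q}

/-- The `L¹`-dilation `g_t(x) = t⁻ⁿ g(x / t)`. -/
def dil {n : ℕ} (g : Euc n → ℂ) (t : ℝ) (x : Euc n) : ℂ :=
  ((t ^ n)⁻¹ : ℝ) • g ((t⁻¹ : ℝ) • x)

/-- The Bochner-Riesz kernel `φ` of order `δ`, i.e. the inverse Fourier transform of
`ξ ↦ (1 - |ξ|²)₊^δ`. -/
def brKernel (n : ℕ) (δ : ℝ) : Euc n → ℂ :=
  𝓕⁻ fun ξ : Euc n => (Complex.ofReal (((1 - ‖ξ‖ ^ 2) ⊔ 0) ^ δ))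

/-- The Bochner-Riesz operator `T^δ_R f = φ_{1/R} * f` of order `δ`. -/
def brOp (n : ℕ) (δ R : ℝ) (f : Euc n → ℂ) (x : Euc n) : ℂ :=
  ∫ y, dil (brKernel n δ) R⁻¹ (x - y) * f y

/-- The maximal Bochner-Riesz operator `T^δ_* f(x) = sup_{R > 0} |T^δ_R f(x)|`. -/
def maxBR (n : ℕ) (δ : ℝ) (f : Euc n → ℂ) (x : Euc n) : ℝ≥0∞ :=
  ⨆ (R : ℝ) (_ : 0 < R), (‖brOp n δ R f x‖₊ : ℝ≥0∞)

/-- Partial derivative in the `i`-th coordinate direction. -/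
def pderiv' {n : ℕ} (i : Fin n) (f : Euc n → ℂ) : Euc n → ℂ :=
  fun x => fderiv ℝ f x (EuclideanSpace.single i 1)

/-- The multi-index partial derivative `D^α f`. -/
def mderiv {n : ℕ} (α : Fin n → ℕ) (f : Euc n → ℂ) : Euc n → ℂ :=
  (((List.finRange n).map fun i => (pderiv' i)^[α i]).foldr (· ∘ ·) id) f

/-- The test function class
`𝒜_N = {φ ∈ 𝒮 : sup_x sup_{|α| ≤ N+1} (1+|x|)^{N+n+1} |D^α φ(x)| ≤ 1}`. -/
def inTestClass {n : ℕ} (N : ℕ) (φ : SchwartzMap (Euc n) ℂ) : Prop :=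
  ∀ (x : Euc n) (α : Fin n → ℕ), (∑ i, α i) ≤ N + 1 →
    (1 + ‖x‖) ^ (N + n + 1) * ‖mderiv α (⇑φ) x‖ ≤ 1

/-- The radial grand maximal function
`G⁺ f(x) = sup_{φ ∈ 𝒜_N} sup_{t > 0} |(φ_t * f)(x)|`. -/
def grandMax {n : ℕ} (N : ℕ) (f : Euc n → ℂ) (x : Euc n) : ℝ≥0∞ :=
  ⨆ (φ : SchwartzMap (Euc n) ℂ) (_ : inTestClass N φ) (t : ℝ) (_ : 0 < t),
    (‖∫ y, dil (⇑φ) t (x - y) * f y‖₊ : ℝ≥0∞)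

/-- The weak `L^p` quasinorm `sup_{λ > 0} λ · μ({x : g(x) > λ})^{1/p}` of an
`ℝ≥0∞`-valued function with respect to the measure `μ`. -/
def weakNorm {n : ℕ} (μ : Measure (Euc n)) (p : ℝ) (g : Euc n → ℝ≥0∞) : ℝ≥0∞ :=
  ⨆ (lam : ℝ≥0) (_ : 0 < lam), (lam : ℝ≥0∞) * μ {x | (lam : ℝ≥0∞) < g x} ^ (1 / p)

/-- The weak Hardy space quasinorm `‖f‖_{WH^p_w} = ‖G⁺ f‖_{WL^p_w}`, with grand maximal
function taken over the test class `𝒜_N`. -/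
def whNorm {n : ℕ} (N : ℕ) (μ : Measure (Euc n)) (p : ℝ) (f : Euc n → ℂ) : ℝ≥0∞ :=
  weakNorm μ p (grandMax N f)

/-- The Hardy-Littlewood maximal function (over cubes containing `x`). -/
def hlMax {n : ℕ} (f : Euc n → ℂ) (x : Euc n) : ℝ≥0∞ :=
  ⨆ (x₀ : Euc n) (r : ℝ) (_ : 0 < r) (_ : x ∈ cube x₀ r),
    (volume (cube x₀ r))⁻¹ * ∫⁻ y in cube x₀ r, (‖f y‖₊ : ℝ≥0∞)

/-! ### Perturbed oscillators -/

/-- The equation `u'' = (k / r² - ω²) u` on the half-line `r > 0`, with `v` in the role of `u'`;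
it is the harmonic oscillator of frequency `ω` perturbed by an inverse-square potential. -/
structure PerturbedOscillator (ω k : ℝ) (u v : ℝ → ℝ) : Prop where
  hasDerivAt : ∀ r, 0 < r → HasDerivAt u (v r) r
  hasDerivAt_deriv : ∀ r, 0 < r → HasDerivAt v ((k / r ^ 2 - ω ^ 2) * u r) r

/-- The energy `v² + ω² u²` of an oscillator of frequency `ω` with position `u` and velocity `v`. -/
def oscillatorEnergy (ω : ℝ) (u v : ℝ → ℝ) (r : ℝ) : ℝ := v r ^ 2 + (ω * u r) ^ 2

namespace PerturbedOscillator

variable {ω k : ℝ} {u v : ℝ → ℝ}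

theorem hasDerivAt_energy_mul_exp (h : PerturbedOscillator ω k u v) (c : ℝ) {r : ℝ} (hr : 0 < r) :
    HasDerivAt (fun r => oscillatorEnergy ω u v r * Real.exp (c / r))
      (Real.exp (c / r) / r ^ 2 * (2 * k * (u r * v r) - c * oscillatorEnergy ω u v r)) r := by
  have hexp : HasDerivAt (fun r : ℝ => c / r) (c * -(r ^ 2)⁻¹) r :=
    (hasDerivAt_inv hr.ne').const_mul c
  refine ((((h.hasDerivAt_deriv r hr).pow 2).add
    (((h.hasDerivAt r hr).const_mul ω).pow 2)).mul hexp.exp).congr_deriv ?_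
  simp only [oscillatorEnergy, Pi.add_apply, Pi.pow_apply]
  field_simp
  ring

theorem abs_two_mul_le_energy (hω : 0 < ω) (k : ℝ) (u v : ℝ → ℝ) (r : ℝ) :
    |2 * k * (u r * v r)| ≤ |k| / ω * oscillatorEnergy ω u v r := by
  have hamgm : 2 * (ω * |u r|) * |v r| ≤ oscillatorEnergy ω u v r :=
    (two_mul_le_add_sq _ _).trans_eq (by
      rw [oscillatorEnergy, mul_pow, mul_pow, sq_abs, sq_abs, add_comm])
  calc |2 * k * (u r * v r)| = |k| / ω * (2 * (ω * |u r|) * |v r|) := by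
        rw [abs_mul, abs_mul, abs_mul, abs_two]
        field_simp
    _ ≤ _ := by gcongr

theorem antitoneOn_energy_mul_exp (h : PerturbedOscillator ω k u v) (hω : 0 < ω) :
    AntitoneOn (fun r => oscillatorEnergy ω u v r * Real.exp (|k| / ω / r)) (Ioi 0) := by
  refine antitoneOn_of_hasDerivWithinAt_nonpos (convex_Ioi 0)
    (fun r hr => (h.hasDerivAt_energy_mul_exp _ hr).continuousAt.continuousWithinAt)
    (fun r hr => (h.hasDerivAt_energy_mul_exp _ (interior_subset hr)).hasDerivWithinAt)
    fun r _ => mul_nonpos_of_nonneg_of_nonpos (by positivity) ?_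
  linarith [le_of_abs_le (abs_two_mul_le_energy hω k u v r)]

theorem monotoneOn_energy_mul_exp_neg (h : PerturbedOscillator ω k u v) (hω : 0 < ω) :
    MonotoneOn (fun r => oscillatorEnergy ω u v r * Real.exp (-(|k| / ω) / r)) (Ioi 0) := by
  refine monotoneOn_of_hasDerivWithinAt_nonneg (convex_Ioi 0)
    (fun r hr => (h.hasDerivAt_energy_mul_exp _ hr).continuousAt.continuousWithinAt)
    (fun r hr => (h.hasDerivAt_energy_mul_exp _ (interior_subset hr)).hasDerivWithinAt)
    fun r _ => mul_nonneg (by positivity) ?_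
  linarith [neg_le_of_abs_le (abs_two_mul_le_energy hω k u v r)]

theorem energy_pos (h : PerturbedOscillator ω k u v) (hω : 0 < ω) {r₀ r : ℝ} (hr₀ : 0 < r₀)
    (hu : u r₀ ≠ 0) (hr : 0 < r) : 0 < oscillatorEnergy ω u v r := by
  have h₀ : 0 < oscillatorEnergy ω u v r₀ := by unfold oscillatorEnergy; positivity
  rcases le_total r₀ r with hle | hle
  · exact pos_of_mul_pos_left ((mul_pos h₀ (Real.exp_pos _)).trans_le
      (h.monotoneOn_energy_mul_exp_neg hω hr₀ hr hle)) (Real.exp_pos _).le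
  · exact pos_of_mul_pos_left ((mul_pos h₀ (Real.exp_pos _)).trans_le
      (h.antitoneOn_energy_mul_exp hω hr hr₀ hle)) (Real.exp_pos _).le

theorem energy_le (h : PerturbedOscillator ω k u v) (hω : 0 < ω) {r : ℝ} (hr : 1 ≤ r) :
    oscillatorEnergy ω u v r ≤ oscillatorEnergy ω u v 1 * Real.exp (|k| / ω) := by
  have hmono := h.antitoneOn_energy_mul_exp hω (mem_Ioi.2 one_pos) (one_pos.trans_le hr) hr
  have hE : 0 ≤ oscillatorEnergy ω u v r := by unfold oscillatorEnergy; positivity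
  exact (le_mul_of_one_le_right hE (Real.one_le_exp (x := |k| / ω / r) (by positivity))).trans
    (by simpa using hmono)

theorem le_energy (h : PerturbedOscillator ω k u v) (hω : 0 < ω) {r : ℝ} (hr : 1 ≤ r) :
    oscillatorEnergy ω u v 1 * Real.exp (-(|k| / ω)) ≤ oscillatorEnergy ω u v r := by
  have hmono := h.monotoneOn_energy_mul_exp_neg hω (mem_Ioi.2 one_pos) (one_pos.trans_le hr) hr
  have hE : 0 ≤ oscillatorEnergy ω u v r := by unfold oscillatorEnergy; positivity
  refine le_trans (by simpa using hmono) (mul_le_of_le_one_right hE (Real.exp_le_one_iff.2 ?_))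
  rw [neg_div, neg_nonpos]
  positivity

theorem exists_abs_le (h : PerturbedOscillator ω k u v) (hω : 0 < ω) :
    ∃ C : ℝ, ∀ r, 1 ≤ r → |u r| ≤ C := by
  refine ⟨√(oscillatorEnergy ω u v 1 * Real.exp (|k| / ω)) / ω, fun r hr => ?_⟩
  rw [le_div_iff₀' hω, ← abs_of_pos hω, ← abs_mul, abs_of_pos hω]
  refine Real.abs_le_sqrt (le_trans ?_ (h.energy_le hω hr))
  exact le_add_of_nonneg_left (sq_nonneg _)

theorem exists_le_abs_add_abs (h : PerturbedOscillator ω k u v) (hω : 0 < ω) {r₀ : ℝ}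
    (hr₀ : 0 < r₀) (hu : u r₀ ≠ 0) :
    ∃ c : ℝ, 0 < c ∧ ∀ r, 1 ≤ r → c ≤ |v r| + ω * |u r| := by
  have hE := h.energy_pos hω hr₀ hu one_pos
  refine ⟨√(oscillatorEnergy ω u v 1 * Real.exp (-(|k| / ω))), by positivity, fun r hr => ?_⟩
  refine Real.sqrt_le_iff.2 ⟨by positivity, (h.le_energy hω hr).trans ?_⟩
  have hcross : 0 ≤ 2 * |v r| * (ω * |u r|) := by positivity
  rw [oscillatorEnergy, add_sq, mul_pow, mul_pow, sq_abs, sq_abs]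
  linarith

theorem countable_zeros (h : PerturbedOscillator ω k u v) (hω : 0 < ω) {r₀ : ℝ} (hr₀ : 0 < r₀)
    (hu : u r₀ ≠ 0) : {r : ℝ | 0 < r ∧ u r = 0}.Countable := by
  have hisolated : ∀ r ∈ {r : ℝ | 0 < r ∧ u r = 0}, ∀ᶠ x in nhdsWithin r {r}ᶜ, u x ≠ 0 := by
    rintro r ⟨hr, hur⟩
    have hv : v r ≠ 0 := fun hv => (h.energy_pos hω hr₀ hu hr).ne' (by simp [oscillatorEnergy, *])
    exact (h.hasDerivAt r hr).eventually_ne hv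
  have : DiscreteTopology {r : ℝ | 0 < r ∧ u r = 0} := by
    refine discreteTopology_subtype_iff.2 fun r hr => ?_
    rw [← disjoint_iff, Filter.disjoint_principal_right]
    filter_upwards [hisolated r hr] with x hx using fun hmem => hx hmem.2
  exact countable_of_Lindelof_of_discrete (X := {r : ℝ | 0 < r ∧ u r = 0})

theorem hasDerivAt_wronskian (h : PerturbedOscillator ω k u v) (s : ℝ) {r : ℝ} (hr : 0 < r) :
    HasDerivAt (fun r => v r * Real.sin (ω * (r - s)) - ω * (u r * Real.cos (ω * (r - s))))
      (k / r ^ 2 * u r * Real.sin (ω * (r - s))) r := by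
  have hphase : HasDerivAt (fun r : ℝ => ω * (r - s)) ω r := by
    simpa using ((hasDerivAt_id r).sub_const s).const_mul ω
  refine (((h.hasDerivAt_deriv r hr).mul hphase.sin).sub
    (((h.hasDerivAt r hr).mul hphase.cos).const_mul ω)).congr_deriv ?_
  ring

theorem abs_mul_sin_le (h : PerturbedOscillator ω k u v) (hω : 0 < ω) {C s r : ℝ}
    (hC : ∀ r, 1 ≤ r → |u r| ≤ C) (hs : 1 ≤ s) (hsr : s ≤ r) :
    |v r * Real.sin (ω * (r - s))| ≤ ω * (|u s| + |u r|) + |k| * C / s * (r - s) := by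
  have hbound : ∀ x ∈ Icc s r, ‖k / x ^ 2 * u x * Real.sin (ω * (x - s))‖ ≤ |k| * C / s := by
    intro x hx
    have hsx : s ≤ x ^ 2 := by nlinarith [hx.1]
    calc ‖k / x ^ 2 * u x * Real.sin (ω * (x - s))‖
        = |k| / x ^ 2 * |u x| * |Real.sin (ω * (x - s))| := by simp
      _ ≤ |k| / s * C * 1 := by
        have hux := hC x (hs.trans hx.1)
        have hC₀ := (abs_nonneg _).trans hux
        gcongr
        exact Real.abs_sin_le_one _
      _ = _ := by ring
  have hmean := (convex_Icc s r).norm_image_sub_le_of_norm_hasDerivWithin_le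
    (fun x hx => (h.hasDerivAt_wronskian s
      (one_pos.trans_le (hs.trans hx.1))).hasDerivWithinAt) hbound
    (left_mem_Icc.2 hsr) (right_mem_Icc.2 hsr)
  simp only [sub_self, mul_zero, Real.sin_zero, Real.cos_zero, mul_one, zero_sub, sub_neg_eq_add,
    Real.norm_eq_abs, abs_of_nonneg (sub_nonneg.2 hsr)] at hmean
  have hcos : |u r * Real.cos (ω * (r - s))| ≤ |u r| := by
    rw [abs_mul]
    exact mul_le_of_le_one_right (abs_nonneg _) (Real.abs_cos_le_one _)
  have htri : |v r * Real.sin (ω * (r - s))| ≤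
      |v r * Real.sin (ω * (r - s)) - ω * (u r * Real.cos (ω * (r - s))) + ω * u s| +
        (|ω * (u r * Real.cos (ω * (r - s)))| + |ω * u s|) := by
    refine le_trans (le_of_eq ?_) ((abs_add_le _ _).trans (add_le_add_right (abs_sub _ _) _))
    congr 1
    ring
  rw [abs_mul ω, abs_mul ω, abs_of_pos hω] at htri
  linarith [mul_le_mul_of_nonneg_left hcos hω.le]

theorem exists_mul_sub_le_abs_add_abs (h : PerturbedOscillator ω k u v) (hω : 0 < ω) {r₀ : ℝ}
    (hr₀ : 0 < r₀) (hu : u r₀ ≠ 0) :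
    ∃ c a : ℝ, 0 < c ∧ 1 ≤ a ∧ ∀ s r, a ≤ s → s ≤ r → ω * (r - s) ≤ π / 2 →
      c * (r - s) ≤ |u s| + |u r| := by
  obtain ⟨C, hC⟩ := h.exists_abs_le hω
  obtain ⟨c, hc, hE⟩ := h.exists_le_abs_add_abs hω hr₀ hu
  refine ⟨c / (2 * π), max 1 (|k| * C / (ω * c / π)), by positivity, le_max_left _ _,
    fun s r has hsr hθ => ?_⟩
  have hs : 1 ≤ s := (le_max_left _ _).trans has
  have hsr' : 0 ≤ r - s := sub_nonneg.2 hsr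
  have herr : |k| * C / s ≤ ω * c / π :=
    (div_le_comm₀ (by positivity) (by positivity)).1 ((le_max_right _ _).trans has)
  have hsin : 2 / π * (ω * (r - s)) ≤ Real.sin (ω * (r - s)) :=
    Real.mul_le_sin (by positivity) hθ
  have hsin₀ : 0 ≤ Real.sin (ω * (r - s)) := le_trans (by positivity) hsin
  have hW := h.abs_mul_sin_le hω hC hs hsr
  rw [abs_mul, abs_of_nonneg hsin₀] at hW
  have hmain : 2 * (ω * c / π) * (r - s) ≤
      ω * (|u s| + |u r|) + ω * c / π * (r - s) + ω * |u r| := by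
    calc 2 * (ω * c / π) * (r - s) = c * (2 / π * (ω * (r - s))) := by ring
      _ ≤ (|v r| + ω * |u r|) * Real.sin (ω * (r - s)) := by
        gcongr
        exact hE r (hs.trans hsr)
      _ = |v r| * Real.sin (ω * (r - s)) + ω * |u r| * Real.sin (ω * (r - s)) := add_mul _ _ _
      _ ≤ _ := by
        refine add_le_add (hW.trans (by gcongr)) ?_
        exact mul_le_of_le_one_right (by positivity) (Real.sin_le_one _)
  have hscaled : 2 * ω * (c / (2 * π) * (r - s)) ≤ 2 * ω * (|u s| + |u r|) := by
    calc _ = ω * c / π * (r - s) := by field_simp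
      _ ≤ ω * (|u s| + |u r|) + ω * |u r| := by linarith
      _ ≤ _ := by nlinarith [abs_nonneg (u s)]
  exact le_of_mul_le_mul_left hscaled (by positivity)

end PerturbedOscillator

/-! ### Bessel functions through Poisson's integral -/

theorem hasDerivAt_integral_mul_comp {g φ φ' : ℝ → ℝ} {a b ω M : ℝ} (hg : Continuous g)
    (hφ : ∀ x, HasDerivAt φ (φ' x) x) (hφ' : Continuous φ') (hM : ∀ x, |φ' x| ≤ M) (r : ℝ) :
    HasDerivAt (fun r => ∫ s in a..b, g s * φ (ω * r * s))
      (∫ s in a..b, ω * s * g s * φ' (ω * r * s)) r := by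
  have hφc : Continuous φ := continuous_iff_continuousAt.2 fun x => (hφ x).continuousAt
  refine (intervalIntegral.hasDerivAt_integral_of_dominated_loc_of_deriv_le (𝕜 := ℝ)
    (F' := fun r s => ω * s * g s * φ' (ω * r * s)) (bound := fun s => |ω * s * g s| * M)
    Filter.univ_mem ?_ ?_ ?_ ?_ ?_ ?_).2
  · exact Filter.Eventually.of_forall fun r => Continuous.aestronglyMeasurable (by fun_prop)
  · exact Continuous.intervalIntegrable (by fun_prop) _ _
  · exact Continuous.aestronglyMeasurable (by fun_prop)
  · refine Filter.Eventually.of_forall fun s _ r _ => ?_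
    rw [norm_mul]
    exact mul_le_mul_of_nonneg_left (hM _) (abs_nonneg _)
  · exact Continuous.intervalIntegrable (by fun_prop) _ _
  · refine Filter.Eventually.of_forall fun s _ r _ => ?_
    have hphase : HasDerivAt (fun r : ℝ => ω * r * s) (ω * s) r := by
      simpa using ((hasDerivAt_id r).const_mul ω).mul_const s
    exact (((hφ _).comp r hphase).const_mul (g s)).congr_deriv (by ring)

/-- Poisson's integral `∫_{-1}^1 (1 - s²)^μ cos (2πrs) ds`. Up to a constant factor it is
`r^(-ν) J_ν (2πr)` with `J_ν` the Bessel function of order `ν = μ + 1/2`. -/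
def poissonIntegral (μ r : ℝ) : ℝ := ∫ s in (-1 : ℝ)..1, (1 - s ^ 2) ^ μ * Real.cos (2 * π * r * s)

/-- The derivative of `poissonIntegral μ`, obtained by differentiating under the integral sign. -/
def poissonIntegralDeriv (μ r : ℝ) : ℝ :=
  ∫ s in (-1 : ℝ)..1, 2 * π * s * (1 - s ^ 2) ^ μ * -Real.sin (2 * π * r * s)

section PoissonIntegral

variable {μ : ℝ}

theorem continuous_one_sub_sq_rpow (hμ : 0 ≤ μ) : Continuous fun s : ℝ => (1 - s ^ 2) ^ μ :=
  Continuous.rpow_const (by fun_prop) fun _ => Or.inr hμ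

theorem hasDerivAt_poissonIntegral (hμ : 0 ≤ μ) (r : ℝ) :
    HasDerivAt (poissonIntegral μ) (poissonIntegralDeriv μ r) r :=
  hasDerivAt_integral_mul_comp (continuous_one_sub_sq_rpow hμ) Real.hasDerivAt_cos (by fun_prop)
    (fun x => (abs_neg _).trans_le (Real.abs_sin_le_one x)) r

theorem continuous_poissonIntegral (hμ : 0 ≤ μ) : Continuous (poissonIntegral μ) :=
  continuous_iff_continuousAt.2 fun r => (hasDerivAt_poissonIntegral hμ r).continuousAt

theorem hasDerivAt_poissonIntegralDeriv (hμ : 0 ≤ μ) (r : ℝ) :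
    HasDerivAt (poissonIntegralDeriv μ)
      (4 * π ^ 2 * (poissonIntegral (μ + 1) r - poissonIntegral μ r)) r := by
  have hw := continuous_one_sub_sq_rpow hμ
  have hw₁ := continuous_one_sub_sq_rpow (add_nonneg hμ zero_le_one)
  refine (hasDerivAt_integral_mul_comp (g := fun s => 2 * π * s * (1 - s ^ 2) ^ μ)
    (φ := fun x => -Real.sin x) (by fun_prop) (fun x => (Real.hasDerivAt_sin x).neg) (by fun_prop)
    (fun x => (abs_neg _).trans_le (Real.abs_cos_le_one x)) r).congr_deriv ?_
  rw [poissonIntegral, poissonIntegral, ← intervalIntegral.integral_sub,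
    ← intervalIntegral.integral_const_mul]
  · refine intervalIntegral.integral_congr fun s hs => ?_
    rw [uIcc_of_le (by norm_num)] at hs
    have hs₀ : 0 ≤ 1 - s ^ 2 := by nlinarith [hs.1, hs.2]
    simp only [Real.rpow_add_one' hs₀ (by linarith : μ + 1 ≠ 0)]
    ring
  all_goals exact Continuous.intervalIntegrable (by fun_prop) _ _

theorem mul_poissonIntegral_add_one (hμ : 0 ≤ μ) (r : ℝ) :
    2 * π ^ 2 * r * poissonIntegral (μ + 1) r = -((μ + 1) * poissonIntegralDeriv μ r) := by
  have hw := continuous_one_sub_sq_rpow hμ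
  have hparts : ∫ s in (-1 : ℝ)..1, (1 - s ^ 2) ^ (μ + 1) * (Real.cos (2 * π * r * s) * (2 * π * r))
      = - ∫ s in (-1 : ℝ)..1, (-(2 * s) * (μ + 1) * (1 - s ^ 2) ^ μ) *
          Real.sin (2 * π * r * s) := by
    rw [intervalIntegral.integral_mul_deriv_eq_deriv_mul
      (u' := fun s => -(2 * s) * (μ + 1) * (1 - s ^ 2) ^ μ)
      (v := fun s => Real.sin (2 * π * r * s))]
    · have : (0 : ℝ) ^ (μ + 1) = 0 := Real.zero_rpow (by linarith)
      norm_num [this]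
    · intro s _
      have hbase : HasDerivAt (fun s : ℝ => 1 - s ^ 2) (-(2 * s)) s := by
        simpa using (hasDerivAt_pow 2 s).const_sub 1
      exact (hbase.rpow_const (p := μ + 1) (Or.inr (by linarith))).congr_deriv
        (by rw [add_sub_cancel_right])
    · intro s _
      have hphase : HasDerivAt (fun s : ℝ => 2 * π * r * s) (2 * π * r) s := by
        simpa using (hasDerivAt_id s).const_mul (2 * π * r)
      exact hphase.sin
    all_goals exact Continuous.intervalIntegrable (by fun_prop) _ _
  calc 2 * π ^ 2 * r * poissonIntegral (μ + 1) r
      = π * ∫ s in (-1 : ℝ)..1, (1 - s ^ 2) ^ (μ + 1) *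
          (Real.cos (2 * π * r * s) * (2 * π * r)) := by
        simp_rw [← mul_assoc, intervalIntegral.integral_mul_const, poissonIntegral]
        ring
    _ = _ := by
        rw [hparts, poissonIntegralDeriv, mul_neg, ← intervalIntegral.integral_const_mul,
          ← intervalIntegral.integral_const_mul]
        congr 2 with s
        ring

-- The factor `r ^ (μ + 1)` removes the first-order term from Bessel's equation
-- `I'' + 2 (μ + 1) / r * I' + 4π² I = 0`, which combines the two preceding lemmas.
theorem perturbedOscillator_poissonIntegral (hμ : 0 ≤ μ) :
    PerturbedOscillator (2 * π) (μ * (μ + 1)) (fun r => r ^ (μ + 1) * poissonIntegral μ r)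
      fun r => r ^ (μ + 1) * (poissonIntegralDeriv μ r + (μ + 1) / r * poissonIntegral μ r) where
  hasDerivAt r hr := by
    refine ((Real.hasDerivAt_rpow_const (p := μ + 1) (Or.inl hr.ne')).mul
      (hasDerivAt_poissonIntegral hμ r)).congr_deriv ?_
    rw [Real.rpow_sub_one hr.ne']
    ring
  hasDerivAt_deriv r hr := by
    have hinv : HasDerivAt (fun r : ℝ => (μ + 1) / r) ((μ + 1) * -(r ^ 2)⁻¹) r :=
      (hasDerivAt_inv hr.ne').const_mul (μ + 1)
    have hbessel : poissonIntegral (μ + 1) r =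
        -((μ + 1) * poissonIntegralDeriv μ r) / (2 * π ^ 2 * r) := by
      rw [← mul_poissonIntegral_add_one hμ]
      field_simp
    refine ((Real.hasDerivAt_rpow_const (p := μ + 1) (Or.inl hr.ne')).mul
      ((hasDerivAt_poissonIntegralDeriv hμ r).add
        (hinv.mul (hasDerivAt_poissonIntegral hμ r)))).congr_deriv ?_
    simp only [Pi.add_apply, Pi.mul_apply]
    rw [Real.rpow_sub_one hr.ne', hbessel]
    field_simp
    ring

theorem poissonIntegral_pos (hμ : 0 ≤ μ) {r : ℝ} (hr₀ : 0 ≤ r) (hr : r < 1 / 4) :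
    0 < poissonIntegral μ r := by
  have hw := continuous_one_sub_sq_rpow hμ
  refine intervalIntegral.intervalIntegral_pos_of_pos_on
    (Continuous.intervalIntegrable (by fun_prop) _ _) (fun s hs => ?_) (by norm_num)
  have hrs : |r * s| < 1 / 4 := by
    rw [abs_mul, abs_of_nonneg hr₀]
    exact (mul_le_of_le_one_right hr₀ (abs_le.2 ⟨hs.1.le, hs.2.le⟩)).trans_lt hr
  rw [abs_lt] at hrs
  refine mul_pos (Real.rpow_pos_of_pos (by nlinarith [hs.1, hs.2]) _)
    (Real.cos_pos_of_mem_Ioo ⟨?_, ?_⟩) <;> nlinarith [Real.pi_pos, hrs.1, hrs.2]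

theorem rpow_mul_poissonIntegral_eighth_ne_zero (hμ : 0 ≤ μ) :
    (1 / 8 : ℝ) ^ (μ + 1) * poissonIntegral μ (1 / 8) ≠ 0 :=
  (mul_pos (by positivity) (poissonIntegral_pos hμ (by norm_num) (by norm_num))).ne'

theorem countable_zeros_poissonIntegral (hμ : 0 ≤ μ) :
    {r : ℝ | 0 < r ∧ poissonIntegral μ r = 0}.Countable :=
  Countable.mono (fun _ hr => And.intro hr.1 (mul_eq_zero_of_right _ hr.2))
    ((perturbedOscillator_poissonIntegral hμ).countable_zeros two_pi_pos (by norm_num)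
      (rpow_mul_poissonIntegral_eighth_ne_zero hμ))

theorem abs_poissonIntegral_le_two (hμ : 0 ≤ μ) (r : ℝ) : |poissonIntegral μ r| ≤ 2 := by
  have hbound : ∀ s ∈ uIoc (-1 : ℝ) 1, ‖(1 - s ^ 2) ^ μ * Real.cos (2 * π * r * s)‖ ≤ 1 := by
    intro s hs
    rw [uIoc_of_le (by norm_num)] at hs
    have hs₀ : 0 ≤ 1 - s ^ 2 := by nlinarith [hs.1, hs.2]
    rw [norm_mul, Real.norm_of_nonneg (by positivity)]
    exact mul_le_one₀ (Real.rpow_le_one hs₀ (by nlinarith) hμ) (norm_nonneg _)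
      (Real.abs_cos_le_one _)
  refine (intervalIntegral.norm_integral_le_of_norm_le_const hbound).trans (le_of_eq ?_)
  norm_num

theorem exists_abs_poissonIntegral_le (hμ : 0 ≤ μ) :
    ∃ C : ℝ, 0 < C ∧ ∀ r, 0 ≤ r → |poissonIntegral μ r| ≤ C * (1 + r) ^ (-(μ + 1)) := by
  obtain ⟨C, hC⟩ := (perturbedOscillator_poissonIntegral hμ).exists_abs_le two_pi_pos
  refine ⟨2 ^ (μ + 1) * max C 2, by positivity, fun r hr => ?_⟩
  rw [Real.rpow_neg (by positivity), ← div_eq_mul_inv, le_div_iff₀ (by positivity), mul_comm]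
  rcases le_total 1 r with h1 | h1
  · calc (1 + r) ^ (μ + 1) * |poissonIntegral μ r|
        ≤ (2 * r) ^ (μ + 1) * |poissonIntegral μ r| := by gcongr; linarith
      _ = 2 ^ (μ + 1) * |r ^ (μ + 1) * poissonIntegral μ r| := by
        rw [Real.mul_rpow two_pos.le hr, abs_mul,
          abs_of_nonneg (Real.rpow_nonneg hr (μ + 1)), mul_assoc]
      _ ≤ _ := by gcongr; exact (hC r h1).trans (le_max_left _ _)
  · gcongr
    · linarith
    · exact (abs_poissonIntegral_le_two hμ r).trans (le_max_right _ _)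

theorem exists_mul_rpow_le_abs_poissonIntegral_add (hμ : 0 ≤ μ) :
    ∃ c a : ℝ, 0 < c ∧ 1 ≤ a ∧ ∀ s r, a ≤ s → s ≤ r → r - s ≤ 1 / 4 →
      c * (r - s) * r ^ (-(μ + 1)) ≤ |poissonIntegral μ s| + |poissonIntegral μ r| := by
  obtain ⟨c, a, hc, ha, h⟩ :=
    (perturbedOscillator_poissonIntegral hμ).exists_mul_sub_le_abs_add_abs two_pi_pos
      (by norm_num) (rpow_mul_poissonIntegral_eighth_ne_zero hμ)
  refine ⟨c, a, hc, ha, fun s r has hsr hr => ?_⟩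
  have hs : 0 < s := by linarith
  have hr₀ : 0 < r := by linarith
  rw [Real.rpow_neg hr₀.le, ← div_eq_mul_inv, div_le_iff₀ (by positivity)]
  refine (h s r has hsr (by nlinarith [Real.pi_pos])).trans ?_
  rw [abs_mul, abs_mul, abs_of_pos (Real.rpow_pos_of_pos hs _),
    abs_of_pos (Real.rpow_pos_of_pos hr₀ _), add_mul, mul_comm, mul_comm (r ^ _)]
  gcongr

end PoissonIntegral

/-! ### The Bochner–Riesz kernel as a Poisson integral -/

theorem exists_linearIsometryEquiv_single_norm {m : ℕ} (x : Euc (m + 1)) :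
    ∃ A : Euc (m + 1) ≃ₗᵢ[ℝ] Euc (m + 1), A (EuclideanSpace.single 0 ‖x‖) = x :=
  ⟨_, Submodule.reflection_sub (by simp)⟩

theorem brKernel_comp_linearIsometryEquiv {n : ℕ} (δ : ℝ) (A : Euc n ≃ₗᵢ[ℝ] Euc n) (x : Euc n) :
    brKernel n δ (A x) = brKernel n δ x := by
  refine (Real.fourierInv_comp_linearIsometry A _ x).symm.trans ?_
  simp only [brKernel, Function.comp_def, LinearIsometryEquiv.norm_map]

/-- The integrand of the Fourier integral of the kernel at a point of norm `r`, the frequency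
being split into its component along that point and the orthogonal ones. -/
def slicedIntegrand (m : ℕ) (δ r : ℝ) (z : ℝ × (Fin m → ℝ)) : ℂ :=
  cexp (↑(2 * π * (z.1 * r)) * I) * (((1 - z.1 ^ 2 - ∑ i, z.2 i ^ 2) ⊔ 0) ^ δ : ℝ)

theorem brKernel_eq_integral_prod {m : ℕ} (δ : ℝ) (x : Euc (m + 1)) :
    brKernel (m + 1) δ x = ∫ z, slicedIntegrand m δ ‖x‖ z := by
  obtain ⟨A, hA⟩ := exists_linearIsometryEquiv_single_norm x
  have hsplit := (volume_preserving_piFinSuccAbove (fun _ : Fin (m + 1) => ℝ) 0).comp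
    (PiLp.volume_preserving_ofLp (Fin (m + 1)))
  have hemb :=
    (MeasurableEquiv.piFinSuccAbove (fun _ : Fin (m + 1) => ℝ) 0).measurableEmbedding.comp
      (MeasurableEquiv.toLp 2 (Fin (m + 1) → ℝ)).symm.measurableEmbedding
  rw [← congrArg (brKernel (m + 1) δ) hA, brKernel_comp_linearIsometryEquiv, brKernel,
    Real.fourierInv_eq', ← hsplit.integral_comp hemb]
  congr 1
  ext ξ
  simp [slicedIntegrand, EuclideanSpace.norm_sq_eq, Fin.sum_univ_succ,
    EuclideanSpace.inner_single_right, MeasurableEquiv.piFinSuccAbove_apply, Fin.insertNthEquiv,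
    sub_sub, mul_comm, Fin.tail]

/-- The mass `∫ (1 - |η|²)₊^δ dη` of the central slice of the multiplier, which is the constant
relating the kernel in dimension `m + 1` to a Poisson integral. -/
def sliceConst (m : ℕ) (δ : ℝ) : ℝ := ∫ η : Fin m → ℝ, ((1 - ∑ i, η i ^ 2) ⊔ 0) ^ δ

section Slices

variable {m : ℕ} {δ : ℝ}

theorem norm_le_one_of_sum_sq_le_one {η : Fin m → ℝ} (h : ∑ i, η i ^ 2 ≤ 1) : ‖η‖ ≤ 1 := by
  refine (pi_norm_le_iff_of_nonneg zero_le_one).2 fun i => ?_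
  rw [Real.norm_eq_abs, ← sq_le_one_iff_abs_le_one]
  exact (Finset.single_le_sum (f := fun i => η i ^ 2) (fun _ _ => sq_nonneg _)
    (Finset.mem_univ i)).trans h

theorem hasCompactSupport_rpow_one_sub {X : Type*} [TopologicalSpace X] [R1Space X] {g : X → ℝ}
    {K : Set X} (hδ : δ ≠ 0) (hK : IsCompact K) (hg : ∀ x, g x ≤ 1 → x ∈ K) :
    HasCompactSupport fun x => ((1 - g x) ⊔ 0) ^ δ := by
  refine HasCompactSupport.intro hK fun x hx => ?_
  have hgx : 1 - g x ≤ 0 := sub_nonpos.2 (le_of_not_ge (mt (hg x) hx))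
  rw [max_eq_right hgx, Real.zero_rpow hδ]

theorem sliceConst_pos (hδ : 0 < δ) : 0 < sliceConst m δ :=
  Continuous.integral_pos_of_hasCompactSupport_nonneg_nonzero (x := 0)
    (Continuous.rpow_const (by fun_prop) fun _ => Or.inr hδ.le)
    (hasCompactSupport_rpow_one_sub hδ.ne' (isCompact_closedBall 0 1) fun _ hη =>
      mem_closedBall_zero_iff.2 (norm_le_one_of_sum_sq_le_one hη))
    (fun η => by positivity) (by simp)

theorem integrable_slicedIntegrand (hδ : 0 < δ) (r : ℝ) :
    Integrable (slicedIntegrand m δ r) := by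
  have hcont : Continuous fun z : ℝ × (Fin m → ℝ) => ((1 - z.1 ^ 2 - ∑ i, z.2 i ^ 2) ⊔ 0) ^ δ :=
    Continuous.rpow_const (by fun_prop) fun _ => Or.inr hδ.le
  have hsupp : HasCompactSupport
      fun z : ℝ × (Fin m → ℝ) => ((1 - z.1 ^ 2 - ∑ i, z.2 i ^ 2) ⊔ 0) ^ δ := by
    simp only [sub_sub]
    refine hasCompactSupport_rpow_one_sub hδ.ne'
      ((isCompact_closedBall (0 : ℝ) 1).prod (isCompact_closedBall (0 : Fin m → ℝ) 1)) ?_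
    intro z hz
    have hsum : 0 ≤ ∑ i, z.2 i ^ 2 := Finset.sum_nonneg fun _ _ => sq_nonneg _
    refine ⟨mem_closedBall_zero_iff.2 ?_, mem_closedBall_zero_iff.2 ?_⟩
    · rw [Real.norm_eq_abs, ← sq_le_one_iff_abs_le_one]
      linarith
    · exact norm_le_one_of_sum_sq_le_one (by linarith [sq_nonneg z.1])
  refine Continuous.integrable_of_hasCompactSupport (by unfold slicedIntegrand; fun_prop) ?_
  exact (hsupp.comp_left (g := ((↑) : ℝ → ℂ)) Complex.ofReal_zero).mul_left

theorem integral_slice {s : ℝ} (hs : s ∈ Ioo (-1 : ℝ) 1) :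
    ∫ η : Fin m → ℝ, ((1 - s ^ 2 - ∑ i, η i ^ 2) ⊔ 0) ^ δ =
      sliceConst m δ * (1 - s ^ 2) ^ (δ + m / 2) := by
  have hs₀ : 0 < 1 - s ^ 2 := by nlinarith [hs.1, hs.2]
  set t := √(1 - s ^ 2) with ht
  have ht₀ : 0 < t := Real.sqrt_pos.2 hs₀
  have ht₂ : t ^ 2 = 1 - s ^ 2 := Real.sq_sqrt hs₀.le
  have hscale : ∀ η : Fin m → ℝ, ((1 - s ^ 2 - ∑ i, (t • η) i ^ 2) ⊔ 0) ^ δ =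
      (1 - s ^ 2) ^ δ * ((1 - ∑ i, η i ^ 2) ⊔ 0) ^ δ := fun η => by
    rw [← Real.mul_rpow hs₀.le (le_max_right _ _), mul_max_of_nonneg _ _ hs₀.le, mul_zero]
    simp only [Pi.smul_apply, smul_eq_mul, mul_pow, ht₂, ← Finset.mul_sum]
    ring_nf
  have hsubst := Measure.integral_comp_smul (volume : Measure (Fin m → ℝ))
    (fun η => ((1 - s ^ 2 - ∑ i, η i ^ 2) ⊔ 0) ^ δ) t
  simp only [hscale] at hsubst
  rw [integral_const_mul, Module.finrank_fin_fun, abs_of_pos (by positivity), smul_eq_mul,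
    inv_mul_eq_div, eq_div_iff (by positivity)] at hsubst
  have htm : (1 - s ^ 2) ^ ((m : ℝ) / 2) = t ^ m := by
    rw [ht, Real.sqrt_eq_rpow, ← Real.rpow_mul_natCast hs₀.le]
    ring_nf
  rw [← hsubst, sliceConst, Real.rpow_add hs₀, htm]
  ring

theorem integral_slice_eq_zero (hδ : δ ≠ 0) {s : ℝ} (hs : s ∉ Ioo (-1 : ℝ) 1) :
    ∫ η : Fin m → ℝ, ((1 - s ^ 2 - ∑ i, η i ^ 2) ⊔ 0) ^ δ = 0 := by
  have hs₀ : 1 - s ^ 2 ≤ 0 := by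
    by_contra! h
    exact hs (abs_lt.1 (by rw [← sq_lt_one_iff_abs_lt_one]; linarith))
  refine integral_eq_zero_of_ae (.of_forall fun η => ?_)
  have hsum : 0 ≤ ∑ i, η i ^ 2 := Finset.sum_nonneg fun _ _ => sq_nonneg _
  simp only [Pi.zero_apply]
  rw [max_eq_right (by linarith), Real.zero_rpow hδ]

theorem integral_slicedIntegrand (hδ : δ ≠ 0) (r s : ℝ) :
    ∫ η : Fin m → ℝ, slicedIntegrand m δ r (s, η) =
      (Ioo (-1 : ℝ) 1).indicator (fun s => (sliceConst m δ : ℂ) *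
        (cexp (↑(2 * π * (s * r)) * I) * ((1 - s ^ 2) ^ (δ + m / 2) : ℝ))) s := by
  simp only [slicedIntegrand]
  rw [integral_const_mul, integral_complex_ofReal]
  by_cases hs : s ∈ Ioo (-1 : ℝ) 1
  · rw [integral_slice hs, indicator_of_mem hs]
    push_cast
    ring
  · rw [integral_slice_eq_zero hδ hs, indicator_of_notMem hs, Complex.ofReal_zero, mul_zero]

end Slices

theorem integral_odd_eq_zero {g : ℝ → ℝ} (hg : ∀ s, g (-s) = -g s) (a : ℝ) :
    ∫ s in (-a)..a, g s = 0 := by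
  have hneg := intervalIntegral.integral_comp_neg (a := -a) (b := a) g
  simp only [hg, neg_neg, intervalIntegral.integral_neg] at hneg
  linarith

theorem integral_cexp_mul_one_sub_sq_rpow {μ : ℝ} (hμ : 0 ≤ μ) (r : ℝ) :
    ∫ s in (-1 : ℝ)..1, cexp (↑(2 * π * (s * r)) * I) * ((1 - s ^ 2) ^ μ : ℝ) =
      poissonIntegral μ r := by
  have hcont := continuous_one_sub_sq_rpow hμ
  have heuler : ∀ s : ℝ, cexp (↑(2 * π * (s * r)) * I) * ((1 - s ^ 2) ^ μ : ℝ) =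
      (((1 - s ^ 2) ^ μ * Real.cos (2 * π * r * s) : ℝ) : ℂ) +
        (((1 - s ^ 2) ^ μ * Real.sin (2 * π * r * s) : ℝ) : ℂ) * I := fun s => by
    rw [Complex.exp_mul_I, ← Complex.ofReal_cos, ← Complex.ofReal_sin,
      show 2 * π * (s * r) = 2 * π * r * s by ring]
    push_cast
    ring
  have hsin : ∫ s in (-1 : ℝ)..1, (1 - s ^ 2) ^ μ * Real.sin (2 * π * r * s) = 0 :=
    integral_odd_eq_zero (fun s => by rw [neg_sq, mul_neg, Real.sin_neg, mul_neg]) 1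
  simp only [heuler]
  rw [intervalIntegral.integral_add (Continuous.intervalIntegrable (by fun_prop) _ _)
      (Continuous.intervalIntegrable (by fun_prop) _ _), intervalIntegral.integral_mul_const,
    intervalIntegral.integral_ofReal, intervalIntegral.integral_ofReal, hsin, Complex.ofReal_zero,
    zero_mul, add_zero, poissonIntegral]

section Kernel

variable {m : ℕ} {δ : ℝ}

theorem brKernel_eq_sliceConst_mul_poissonIntegral (hδ : 0 < δ) (x : Euc (m + 1)) :
    brKernel (m + 1) δ x = ((sliceConst m δ * poissonIntegral (δ + m / 2) ‖x‖ : ℝ) : ℂ) := by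
  rw [brKernel_eq_integral_prod, Measure.volume_eq_prod,
    integral_prod _ (integrable_slicedIntegrand hδ _)]
  simp only [integral_slicedIntegrand hδ.ne']
  rw [integral_indicator measurableSet_Ioo, integral_const_mul, ← integral_Ioc_eq_integral_Ioo,
    ← intervalIntegral.integral_of_le (by norm_num),
    integral_cexp_mul_one_sub_sq_rpow (by positivity), Complex.ofReal_mul]

theorem continuous_brKernel (hδ : 0 < δ) : Continuous (brKernel (m + 1) δ) := by
  have hcont := continuous_poissonIntegral (μ := δ + m / 2) (by positivity)
  rw [funext (brKernel_eq_sliceConst_mul_poissonIntegral hδ)]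
  fun_prop

theorem norm_brKernel (hδ : 0 < δ) (x : Euc (m + 1)) :
    ‖brKernel (m + 1) δ x‖ = sliceConst m δ * |poissonIntegral (δ + m / 2) ‖x‖| := by
  rw [brKernel_eq_sliceConst_mul_poissonIntegral hδ, Complex.norm_real, Real.norm_eq_abs, abs_mul,
    abs_of_pos (sliceConst_pos hδ)]

theorem exists_norm_brKernel_le (hδ : 0 < δ) :
    ∃ C : ℝ, 0 < C ∧ ∀ x : Euc (m + 1),
      ‖brKernel (m + 1) δ x‖ ≤ C * (1 + ‖x‖) ^ (-(δ + m / 2 + 1)) := by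
  obtain ⟨C, hC, h⟩ := exists_abs_poissonIntegral_le (μ := δ + m / 2) (by positivity)
  have hslice := sliceConst_pos (m := m) hδ
  refine ⟨sliceConst m δ * C, by positivity, fun x => ?_⟩
  rw [norm_brKernel hδ, mul_assoc]
  gcongr
  exact h _ (norm_nonneg x)

theorem brKernel_ne_zero_ae (hδ : 0 < δ) : ∀ᵐ x : Euc (m + 1), brKernel (m + 1) δ x ≠ 0 := by
  have hzeros : {x : Euc (m + 1) | ¬ brKernel (m + 1) δ x ≠ 0} ⊆
      {0} ∪ ⋃ r ∈ {r : ℝ | 0 < r ∧ poissonIntegral (δ + m / 2) r = 0}, Metric.sphere 0 r := by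
    intro x hx
    rcases eq_or_ne x 0 with h | h
    · exact Or.inl h
    · refine Or.inr (mem_biUnion (x := ‖x‖) ⟨norm_pos_iff.2 h, ?_⟩ (by simp))
      rw [Set.mem_ofPred_eq, not_not, ← norm_eq_zero, norm_brKernel hδ] at hx
      exact abs_eq_zero.1 ((mul_eq_zero.1 hx).resolve_left (sliceConst_pos hδ).ne')
  refine measure_mono_null hzeros (measure_union_null (measure_singleton _) ?_)
  exact (measure_biUnion_null_iff (countable_zeros_poissonIntegral (by positivity))).2
    fun r _ => Measure.addHaar_sphere _ _ _

end Kernel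

/-! ### Lower bounds for averages of the kernel -/

section Translates

variable {E : Type*} [NormedAddCommGroup E] [NormedSpace ℝ E]

theorem norm_div_norm_smul_le {τ : ℝ} (hτ : 0 ≤ τ) (y : E) : ‖(τ / ‖y‖) • y‖ ≤ τ := by
  rw [norm_smul, Real.norm_of_nonneg (by positivity)]
  rw [div_mul_eq_mul_div]
  exact div_le_of_le_mul₀ (norm_nonneg y) hτ le_rfl

theorem half_le_norm_sub_norm_sub_smul {y z : E} {τ : ℝ} (hτ : 0 ≤ τ) (hy : τ ≤ ‖y‖)
    (hz : 4 * ‖z‖ ≤ ‖y‖) : τ / 2 ≤ ‖y - z‖ - ‖y - z - (τ / ‖y‖) • y‖ := by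
  rcases (norm_nonneg y).eq_or_lt with h₀ | h₀
  · obtain rfl : τ = 0 := (hy.trans_eq h₀.symm).antisymm hτ
    simp
  have hsplit : y - z - (τ / ‖y‖) • y = (1 - τ / ‖y‖) • (y - z) - (τ / ‖y‖) • z := by module
  have hratio : τ / ‖y‖ ≤ 1 := div_le_one_of_le₀ hy h₀.le
  have hnorm : ‖y - z - (τ / ‖y‖) • y‖ ≤ (1 - τ / ‖y‖) * ‖y - z‖ + τ / ‖y‖ * ‖z‖ := by
    rw [hsplit]
    refine (norm_sub_le _ _).trans (le_of_eq ?_)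
    rw [norm_smul, norm_smul, Real.norm_of_nonneg (sub_nonneg.2 hratio),
      Real.norm_of_nonneg (by positivity)]
  have hgain : τ / ‖y‖ * (‖y‖ / 2) ≤ τ / ‖y‖ * (‖y - z‖ - ‖z‖) := by
    gcongr
    linarith [norm_sub_norm_le y z]
  have hτy : τ / ‖y‖ * (‖y‖ / 2) = τ / 2 := by field_simp
  linarith

end Translates

section Overlap

variable {E : Type*} [NormedAddCommGroup E] [MeasurableSpace E] [BorelSpace E]

theorem setLIntegral_add_translate_le (μ : Measure E) [μ.IsAddRightInvariant] (h : E) {A : Set E}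
    (hA : MeasurableSet A) {g : E → ℝ≥0∞} (hg : Measurable g) :
    ∫⁻ z in A ∩ (fun z => z + h) ⁻¹' A, (g z + g (z + h)) ∂μ ≤ 2 * ∫⁻ z in A, g z ∂μ := by
  rw [lintegral_add_left hg, two_mul]
  refine add_le_add (lintegral_mono_set inter_subset_left)
    ((lintegral_mono_set inter_subset_right).trans_eq ?_)
  exact (measurePreserving_add_right μ h).setLIntegral_comp_preimage hA hg

theorem exists_measure_le_two_mul_inter_translate [NormedSpace ℝ E] [FiniteDimensional ℝ E]
    (μ : Measure E) [μ.IsAddHaarMeasure] {A : Set E} (hA : IsCompact A) (hA₀ : μ A ≠ 0) :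
    ∃ ρ : ℝ, 0 < ρ ∧ ∀ h : E, ‖h‖ < ρ → μ A ≤ 2 * μ (A ∩ (fun z => z + h) ⁻¹' A) := by
  have htendsto := tendsto_measure_symmDiff_preimage_nhds_zero (μ := μ) (ν := μ) (s := A)
    (ContinuousMap.curry ⟨fun p : E × E => p.2 + p.1, by fun_prop⟩).continuous.continuousAt
    (.of_forall fun h => measurePreserving_add_right μ h) (measurePreserving_add_right μ 0)
    hA.nullMeasurableSet hA.measure_ne_top
  obtain ⟨ρ, hρ, hball⟩ := Metric.eventually_nhds_iff.1
    (htendsto.eventually_le_const (ENNReal.half_pos hA₀))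
  refine ⟨ρ, hρ, fun h hh => ?_⟩
  have hdiff : μ (A \ (fun z => z + h) ⁻¹' A) ≤ μ A / 2 :=
    (measure_mono fun z hz => Or.inr (by simpa using hz)).trans
      (hball (by rwa [dist_zero_right]))
  have hsplit : μ A ≤ μ (A ∩ (fun z => z + h) ⁻¹' A) + μ A / 2 :=
    (measure_le_inter_add_sdiff μ A _).trans (by gcongr)
  have hhalf : μ A / 2 ≤ μ (A ∩ (fun z => z + h) ⁻¹' A) := by
    have hfin : μ A / 2 ≠ ⊤ := ENNReal.div_ne_top hA.measure_ne_top two_ne_zero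
    refine (ENNReal.add_le_add_iff_right hfin).1 ?_
    rwa [ENNReal.add_halves]
  calc μ A = 2 * (μ A / 2) := (ENNReal.mul_div_cancel two_ne_zero ENNReal.ofNat_ne_top).symm
    _ ≤ _ := by gcongr

end Overlap

theorem exists_le_setLIntegral_enorm_sub {n : ℕ} {K : Euc n → ℂ} (hK : Continuous K)
    (hK₀ : ∀ᵐ x, K x ≠ 0) {A : Set (Euc n)} (hA : IsCompact A) (hA₀ : volume A ≠ 0) (Y : ℝ) :
    ∃ c : ℝ, 0 < c ∧ ∀ y, ‖y‖ ≤ Y → ENNReal.ofReal c ≤ ∫⁻ z in A, ‖K (z - y)‖ₑ := by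
  have hint : ∀ y, IntegrableOn (fun z => K (z - y)) A := fun y =>
    ContinuousOn.integrableOn_compact hA (by fun_prop)
  have hcont : Continuous fun y => ∫ z in A, ‖K (z - y)‖ :=
    continuous_parametric_integral_of_continuous (f := fun y z => ‖K (z - y)‖) (by fun_prop) hA
  have hpos : ∀ y, 0 < ∫ z in A, ‖K (z - y)‖ := fun y => by
    have hne : ∀ᵐ z, K (z - y) ≠ 0 :=
      (measurePreserving_sub_right volume y).quasiMeasurePreserving.ae hK₀
    rw [setIntegral_pos_iff_support_of_nonneg_ae (.of_forall fun _ => norm_nonneg _) (hint y).norm,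
      inter_comm, measure_inter_conull]
    · exact pos_iff_ne_zero.2 hA₀
    · refine measure_mono_null (t := {z | ¬ K (z - y) ≠ 0}) (fun z hz => ?_) hne
      simpa using hz
  rcases (Metric.closedBall (0 : Euc n) Y).eq_empty_or_nonempty with hempty | hne
  · exact ⟨1, one_pos, fun y hy =>
      absurd (mem_closedBall_zero_iff.2 hy) (hempty ▸ notMem_empty y)⟩
  obtain ⟨y₀, -, hmin⟩ :=
    (isCompact_closedBall (0 : Euc n) Y).exists_isMinOn hne hcont.continuousOn
  refine ⟨_, hpos y₀, fun y hy => ?_⟩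
  rw [← ofReal_integral_norm_eq_lintegral_enorm (hint y)]
  exact ENNReal.ofReal_le_ofReal (hmin (mem_closedBall_zero_iff.2 hy))

section Kernel

variable {m : ℕ} {δ : ℝ}

theorem exists_le_norm_brKernel_add_norm_brKernel (hδ : 0 < δ) {τ : ℝ} (hτ : 0 < τ)
    (hτ' : τ ≤ 1 / 4) (B : ℝ) :
    ∃ c Y : ℝ, 0 < c ∧ ∀ y z : Euc (m + 1), Y ≤ ‖y‖ → ‖z‖ ≤ B →
      c * (1 + ‖y‖) ^ (-(δ + m / 2 + 1)) ≤
        ‖brKernel (m + 1) δ (z - y)‖ + ‖brKernel (m + 1) δ (z + (τ / ‖y‖) • y - y)‖ := by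
  set μ := δ + (m : ℝ) / 2
  have hμ₀ : 0 ≤ μ := by positivity
  obtain ⟨c, a, hc, ha, hP⟩ := exists_mul_rpow_le_abs_poissonIntegral_add hμ₀
  have hslice := sliceConst_pos (m := m) hδ
  refine ⟨sliceConst m δ * (c * (τ / 2) * 2 ^ (-(μ + 1))), a + 1 + 4 * B, by positivity,
    fun y z hy hz => ?_⟩
  have hz₀ := norm_nonneg z
  have hlower := norm_sub_norm_le y z
  have hupper := norm_sub_le y z
  have hgap := half_le_norm_sub_norm_sub_smul (y := y) (z := z) hτ.le (by linarith) (by linarith)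
  have hgap' : ‖y - z‖ - ‖y - z - (τ / ‖y‖) • y‖ ≤ τ := by
    have := norm_sub_norm_le (y - z) (y - z - (τ / ‖y‖) • y)
    rw [sub_sub_cancel] at this
    exact this.trans (norm_div_norm_smul_le hτ.le y)
  have htwo := hP ‖y - z - (τ / ‖y‖) • y‖ ‖y - z‖ (by linarith) (by linarith) (by linarith)
  have hpow : 2 ^ (-(μ + 1)) * (1 + ‖y‖) ^ (-(μ + 1)) ≤ ‖y - z‖ ^ (-(μ + 1)) := by
    rw [← Real.mul_rpow two_pos.le (by positivity)]
    exact Real.rpow_le_rpow_of_nonpos (by linarith) (by linarith) (by linarith)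
  have hneg : z + (τ / ‖y‖) • y - y = -(y - z - (τ / ‖y‖) • y) := by abel
  rw [norm_brKernel hδ, norm_brKernel hδ, norm_sub_rev z y, hneg, norm_neg, ← mul_add, mul_assoc]
  gcongr
  calc c * (τ / 2) * 2 ^ (-(μ + 1)) * (1 + ‖y‖) ^ (-(μ + 1))
      = c * (τ / 2) * (2 ^ (-(μ + 1)) * (1 + ‖y‖) ^ (-(μ + 1))) := mul_assoc _ _ _
    _ ≤ c * (‖y - z‖ - ‖y - z - (τ / ‖y‖) • y‖) * ‖y - z‖ ^ (-(μ + 1)) := by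
      have : 0 ≤ ‖y - z‖ - ‖y - z - (τ / ‖y‖) • y‖ := by linarith
      gcongr
    _ ≤ _ := htwo.trans_eq (add_comm _ _)

-- For large `‖y‖`, at least half of the points `z` of `A` have a translate `z + h` in `A` by a
-- short vector `h` along `y`, and `K (· - y)` cannot be small at both `z` and `z + h`.
theorem exists_le_setLIntegral_brKernel_of_le_norm (hδ : 0 < δ) {A : Set (Euc (m + 1))}
    (hA : IsCompact A) (hA₀ : volume A ≠ 0) :
    ∃ c Y : ℝ, 0 < c ∧ ∀ y, Y ≤ ‖y‖ →
      ENNReal.ofReal (c * (1 + ‖y‖) ^ (-(δ + m / 2 + 1))) ≤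
        ∫⁻ z in A, ‖brKernel (m + 1) δ (z - y)‖ₑ := by
  obtain ⟨ρ, hρ, hoverlap⟩ := exists_measure_le_two_mul_inter_translate volume hA hA₀
  obtain ⟨B, hB⟩ := hA.isBounded.exists_norm_le
  set τ := min (ρ / 2) (1 / 4)
  have hτ₀ : 0 < τ := by positivity
  have hτρ : τ < ρ := (min_le_left _ _).trans_lt (half_lt_self hρ)
  obtain ⟨c, Y, hc, hpair⟩ :=
    exists_le_norm_brKernel_add_norm_brKernel (m := m) hδ hτ₀ (min_le_right _ _) B
  have hvol : 0 < volume.real A := ENNReal.toReal_pos hA₀ hA.measure_ne_top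
  refine ⟨c * volume.real A / 4, Y, by positivity, fun y hy => ?_⟩
  set h := (τ / ‖y‖) • y
  set F := A ∩ (fun z => z + h) ⁻¹' A
  set κ := c * (1 + ‖y‖) ^ (-(δ + (m : ℝ) / 2 + 1))
  have hfour : 4 * ENNReal.ofReal (c * volume.real A / 4 * (1 + ‖y‖) ^ (-(δ + (m : ℝ) / 2 + 1))) =
      ENNReal.ofReal κ * volume A := by
    rw [← ENNReal.ofReal_toReal hA.measure_ne_top, ← ENNReal.ofReal_mul (by positivity),
      ← ENNReal.ofReal_ofNat 4, ← ENNReal.ofReal_mul (by norm_num), measureReal_def]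
    congr 1
    ring
  have hFκ : ENNReal.ofReal κ * volume F ≤
      ∫⁻ z in F, (‖brKernel (m + 1) δ (z - y)‖ₑ + ‖brKernel (m + 1) δ (z + h - y)‖ₑ) := by
    have hFmeas : MeasurableSet F :=
      hA.measurableSet.inter (hA.measurableSet.preimage (by fun_prop))
    rw [← setLIntegral_const]
    refine setLIntegral_mono' hFmeas fun z hz => ?_
    rw [← ofReal_norm, ← ofReal_norm, ← ENNReal.ofReal_add (norm_nonneg _) (norm_nonneg _)]
    exact ENNReal.ofReal_le_ofReal (hpair y z hy (hB z hz.1))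
  refine (ENNReal.mul_le_mul_iff_right four_ne_zero ENNReal.ofNat_ne_top).1 ?_
  calc 4 * ENNReal.ofReal (c * volume.real A / 4 * (1 + ‖y‖) ^ (-(δ + (m : ℝ) / 2 + 1)))
      = ENNReal.ofReal κ * volume A := hfour
    _ ≤ ENNReal.ofReal κ * (2 * volume F) := by
      gcongr
      exact hoverlap h ((norm_div_norm_smul_le hτ₀.le y).trans_lt hτρ)
    _ = 2 * (ENNReal.ofReal κ * volume F) := by ring
    _ ≤ 2 * (2 * ∫⁻ z in A, ‖brKernel (m + 1) δ (z - y)‖ₑ) := by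
      gcongr 2 * ?_
      have hmeas := (continuous_brKernel (m := m) hδ).measurable
      exact hFκ.trans (setLIntegral_add_translate_le volume h hA.measurableSet
        (g := fun z => ‖brKernel (m + 1) δ (z - y)‖ₑ) (by fun_prop))
    _ = 4 * ∫⁻ z in A, ‖brKernel (m + 1) δ (z - y)‖ₑ := by ring

theorem exists_le_setLIntegral_brKernel (hδ : 0 < δ) {A : Set (Euc (m + 1))}
    (hA : IsCompact A) (hA₀ : volume A ≠ 0) :
    ∃ c : ℝ, 0 < c ∧ ∀ y, ENNReal.ofReal (c * (1 + ‖y‖) ^ (-(δ + m / 2 + 1))) ≤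
      ∫⁻ z in A, ‖brKernel (m + 1) δ (z - y)‖ₑ := by
  obtain ⟨c, Y, hc, hfar⟩ := exists_le_setLIntegral_brKernel_of_le_norm hδ hA hA₀
  obtain ⟨c', hc', hnear⟩ :=
    exists_le_setLIntegral_enorm_sub (continuous_brKernel hδ) (brKernel_ne_zero_ae hδ) hA hA₀ Y
  refine ⟨min c c', lt_min hc hc', fun y => ?_⟩
  rcases le_total Y ‖y‖ with hy | hy
  · refine le_trans (ENNReal.ofReal_le_ofReal ?_) (hfar y hy)
    gcongr
    exact min_le_left _ _
  · refine le_trans (ENNReal.ofReal_le_ofReal ?_) (hnear y hy)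
    refine (mul_le_of_le_one_right (by positivity) ?_).trans (min_le_right _ _)
    refine Real.rpow_le_one_of_one_le_of_nonpos (by linarith [norm_nonneg y]) ?_
    have : 0 ≤ δ + (m : ℝ) / 2 + 1 := by positivity
    linarith

end Kernel

/-! ### The domain of the Bochner–Riesz operator -/

/-- Integrability of `f` against the weight `(1 + |y|)^(-b)`: convolutions of `f` with kernels that
decay at this rate converge absolutely at every point. -/
def WeightedIntegrable {n : ℕ} (b : ℝ) (f : Euc n → ℂ) : Prop :=
  Integrable fun y => ((1 + ‖y‖) ^ (-b) : ℝ) • f y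

section WeightedIntegrable

variable {n : ℕ} {b : ℝ} {f : Euc n → ℂ}

theorem continuous_one_add_norm_rpow (b : ℝ) : Continuous fun y : Euc n => (1 + ‖y‖) ^ b :=
  Continuous.rpow_const (by fun_prop) fun y => Or.inl (by positivity)

theorem enorm_one_add_norm_rpow_smul (b : ℝ) (y : Euc n) (z : ℂ) :
    ‖((1 + ‖y‖) ^ (-b) : ℝ) • z‖ₑ = ENNReal.ofReal ((1 + ‖y‖) ^ (-b)) * ‖z‖ₑ := by
  rw [enorm_smul, Real.enorm_of_nonneg (by positivity)]

theorem WeightedIntegrable.aestronglyMeasurable (hf : WeightedIntegrable b f) :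
    AEStronglyMeasurable f volume := by
  have hinv : Continuous fun y : Euc n => (1 + ‖y‖) ^ b := continuous_one_add_norm_rpow b
  refine (hinv.aestronglyMeasurable.smul (Integrable.aestronglyMeasurable hf)).congr
    (.of_forall fun y => ?_)
  simp only [Pi.smul_apply', smul_smul]
  rw [← Real.rpow_add (by positivity), add_neg_cancel, Real.rpow_zero, one_smul]

theorem weightedIntegrable_iff : WeightedIntegrable b f ↔ AEStronglyMeasurable f volume ∧
    ∫⁻ y, ENNReal.ofReal ((1 + ‖y‖) ^ (-b)) * ‖f y‖ₑ ≠ ⊤ := by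
  simp only [← enorm_one_add_norm_rpow_smul, ← lt_top_iff_ne_top]
  refine ⟨fun hf => ⟨hf.aestronglyMeasurable, hf.2⟩, fun hf => ⟨?_, hf.2⟩⟩
  exact (continuous_one_add_norm_rpow (-b)).aestronglyMeasurable.smul hf.1

theorem WeightedIntegrable.of_comp_inv_smul {R : ℝ} (hb : 0 ≤ b) (hR : 0 < R)
    (hf : WeightedIntegrable b fun y => f (R⁻¹ • y)) : WeightedIntegrable b f := by
  have hscaled : Integrable fun y => ((1 + ‖R • y‖) ^ (-b) : ℝ) • f y := by
    simpa only [inv_smul_smul₀ hR.ne'] using Integrable.comp_smul hf hR.ne'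
  have hmeas : AEStronglyMeasurable f volume := by
    simpa only [Function.comp_def, inv_smul_smul₀ hR.ne'] using
      hf.aestronglyMeasurable.comp_quasiMeasurePreserving
        (Measure.quasiMeasurePreserving_smul volume hR.ne')
  refine (hscaled.norm.const_mul (max 1 R ^ b)).mono'
    ((continuous_one_add_norm_rpow (-b)).aestronglyMeasurable.smul hmeas) (.of_forall fun y => ?_)
  have hmax : 0 < max 1 R := by positivity
  have hle : 1 + ‖R • y‖ ≤ max 1 R * (1 + ‖y‖) := by
    rw [norm_smul, Real.norm_of_nonneg hR.le, mul_add, mul_one]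
    gcongr
    · exact le_max_left _ _
    · exact le_max_right _ _
  rw [norm_smul, norm_smul, Real.norm_of_nonneg (by positivity),
    Real.norm_of_nonneg (by positivity), ← mul_assoc]
  gcongr
  calc (1 + ‖y‖) ^ (-b) = max 1 R ^ b * (max 1 R * (1 + ‖y‖)) ^ (-b) := by
        rw [Real.mul_rpow hmax.le (by positivity), ← mul_assoc, ← Real.rpow_add hmax,
          add_neg_cancel, Real.rpow_zero, one_mul]
    _ ≤ max 1 R ^ b * (1 + ‖R • y‖) ^ (-b) := by
      refine mul_le_mul_of_nonneg_left ?_ (by positivity)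
      exact Real.rpow_le_rpow_of_nonpos (by positivity) hle (by linarith)

end WeightedIntegrable

theorem exists_isCompact_setLIntegral_ne_top {n : ℕ} {H : Euc n → ℝ≥0∞}
    (hH : AEMeasurable H volume) (hfin : ¬ ∀ᵐ x, H x = ⊤) :
    ∃ A : Set (Euc n), IsCompact A ∧ volume A ≠ 0 ∧ ∫⁻ x in A, H x ≠ ⊤ := by
  obtain ⟨k, hk⟩ : ∃ k : ℕ, volume {x | H x ≤ k} ≠ 0 := by
    by_contra! hnull
    refine hfin (measure_mono_null (fun x hx => ?_) (measure_iUnion_null hnull))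
    obtain ⟨k, hk⟩ := ENNReal.exists_nat_gt hx
    exact mem_iUnion.2 ⟨k, hk.le⟩
  obtain ⟨S, hSk, hS, hSae⟩ :=
    (nullMeasurableSet_le hH aemeasurable_const).exists_measurable_subset_ae_eq
  obtain ⟨A, hAS, hA, hA₀⟩ := hS.exists_lt_isCompact
    (pos_iff_ne_zero.2 ((measure_congr hSae).trans_ne hk))
  refine ⟨A, hA, hA₀.ne', ne_top_of_le_ne_top (b := ∫⁻ _ in A, (k : ℝ≥0∞)) ?_
    (setLIntegral_mono measurable_const fun x hx => hSk (hAS hx))⟩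
  rw [setLIntegral_const]
  exact ENNReal.mul_ne_top (ENNReal.natCast_ne_top k) hA.measure_ne_top

/-- The convolution `k * f` of a kernel with a function, in the pointwise form in which it enters
`brOp` and `grandMax`; it is zero at points where the integral diverges. -/
def conv {n : ℕ} (k f : Euc n → ℂ) (x : Euc n) : ℂ := ∫ y, k (x - y) * f y

theorem aestronglyMeasurable_of_integrable_conv {n : ℕ} {K f : Euc n → ℂ} (hK : Continuous K)
    (hK₀ : ∀ᵐ x, K x ≠ 0) {x : Euc n} (hx : Integrable fun y => K (x - y) * f y) :
    AEStronglyMeasurable f volume := by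
  have hne : ∀ᵐ y, K (x - y) ≠ 0 :=
    (Measure.measurePreserving_sub_left volume x).quasiMeasurePreserving.ae hK₀
  have hinv : AEStronglyMeasurable (fun y => (K (x - y))⁻¹) volume :=
    (hK.measurable.comp (by fun_prop : Measurable fun y => x - y)).inv.aestronglyMeasurable
  refine (hinv.mul hx.aestronglyMeasurable).congr ?_
  filter_upwards [hne] with y hy using inv_mul_cancel_left₀ hy _

-- By Tonelli, `f` is integrable against any average of the translates of `|K|` over a set where
-- `|K| * |f|` is bounded, and such an average dominates the weight.
theorem weightedIntegrable_of_not_ae_conv_eq_zero {n : ℕ} {b : ℝ} {K f : Euc n → ℂ}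
    (hK : Continuous K) (hK₀ : ∀ᵐ x, K x ≠ 0)
    (hlower : ∀ A, IsCompact A → volume A ≠ 0 → ∃ c : ℝ, 0 < c ∧ ∀ y,
      ENNReal.ofReal (c * (1 + ‖y‖) ^ (-b)) ≤ ∫⁻ z in A, ‖K (z - y)‖ₑ)
    (hf : ¬ ∀ᵐ x, conv K f x = 0) : WeightedIntegrable b f := by
  have hdom : ¬ ∀ᵐ x, ¬ Integrable fun y => K (x - y) * f y :=
    mt (fun h => h.mono fun x hx => integral_undef hx) hf
  have hfmeas : AEStronglyMeasurable f volume := by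
    obtain ⟨x, hx⟩ := (Filter.not_eventually.1 hdom).exists
    exact aestronglyMeasurable_of_integrable_conv hK hK₀ (not_not.1 hx)
  have hmeas : ∀ ν : Measure (Euc n), SFinite ν → AEMeasurable
      (fun z : Euc n × Euc n => ‖K (z.1 - z.2) * f z.2‖ₑ) (ν.prod volume) := fun ν _ =>
    (AEStronglyMeasurable.mul (Continuous.aestronglyMeasurable (by fun_prop)) hfmeas.comp_snd).enorm
  obtain ⟨A, hA, hA₀, hAfin⟩ := exists_isCompact_setLIntegral_ne_top
    (H := fun x => ∫⁻ y, ‖K (x - y) * f y‖ₑ) (hmeas volume inferInstance).lintegral_prod_right'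
    fun htop => hdom (htop.mono fun x hx hint => hint.2.ne hx)
  obtain ⟨c, hc, hcA⟩ := hlower A hA hA₀
  rw [lintegral_lintegral_swap (hmeas _ inferInstance)] at hAfin
  refine weightedIntegrable_iff.2 ⟨hfmeas, fun htop => hAfin (top_unique ?_)⟩
  calc ⊤ = ENNReal.ofReal c * ∫⁻ y, ENNReal.ofReal ((1 + ‖y‖) ^ (-b)) * ‖f y‖ₑ := by
        rw [htop, ENNReal.mul_top (by simpa using hc)]
    _ = ∫⁻ y, ENNReal.ofReal (c * (1 + ‖y‖) ^ (-b)) * ‖f y‖ₑ := by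
      rw [← lintegral_const_mul' _ _ ENNReal.ofReal_ne_top]
      simp only [ENNReal.ofReal_mul hc.le, mul_assoc]
    _ ≤ ∫⁻ y, (∫⁻ x in A, ‖K (x - y)‖ₑ) * ‖f y‖ₑ := by
      gcongr with y
      exact hcA y
    _ ≤ ∫⁻ y, ∫⁻ x in A, ‖K (x - y) * f y‖ₑ := by
      gcongr with y
      simp only [enorm_mul]
      exact lintegral_mul_const_le _ _

theorem brOp_eq_conv_dil (n : ℕ) (δ R : ℝ) (f : Euc n → ℂ) :
    brOp n δ R f = conv (dil (brKernel n δ) R⁻¹) f := rfl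

theorem dil_one {n : ℕ} (k : Euc n → ℂ) : dil k 1 = k := by
  funext x
  simp [dil]

theorem conv_dil_inv {n : ℕ} {R : ℝ} (hR : 0 < R) (k f : Euc n → ℂ) (x : Euc n) :
    conv (dil k R⁻¹) f x = conv k (fun y => f (R⁻¹ • y)) (R • x) := by
  have hsubst := Measure.integral_comp_smul (volume : Measure (Euc n))
    (fun y => k (R • x - y) * f (R⁻¹ • y)) R
  simp only [finrank_euclideanSpace, Fintype.card_fin, inv_smul_smul₀ hR.ne', ← smul_sub] at hsubst
  rw [abs_of_pos (by positivity), eq_inv_smul_iff₀ (by positivity)] at hsubst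
  rw [conv, conv, ← hsubst, ← integral_smul]
  simp only [dil, inv_inv, inv_pow, smul_mul_assoc]

theorem weightedIntegrable_of_not_ae_brOp_eq_zero {m : ℕ} {δ R : ℝ} (hδ : 0 < δ) (hR : 0 < R)
    {f : Euc (m + 1) → ℂ} (hf : ¬ ∀ᵐ x, brOp (m + 1) δ R f x = 0) :
    WeightedIntegrable (δ + m / 2 + 1) f := by
  refine WeightedIntegrable.of_comp_inv_smul (by positivity) hR
    (weightedIntegrable_of_not_ae_conv_eq_zero (continuous_brKernel hδ) (brKernel_ne_zero_ae hδ)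
      (fun A => exists_le_setLIntegral_brKernel hδ) fun hnull => hf ?_)
  filter_upwards [(Measure.quasiMeasurePreserving_smul volume hR.ne').ae hnull] with x hx
  rw [brOp_eq_conv_dil, conv_dil_inv hR, hx]

/-! ### Power-decay majorants -/

/-- The radial majorant `τ⁻ⁿ (1 + |y| / τ)⁻ᵇ` of kernels that are concentrated at scale `τ` and
decay with exponent `b`. -/
def majorant {n : ℕ} (b τ : ℝ) (y : Euc n) : ℝ≥0∞ :=
  ENNReal.ofReal ((τ ^ n)⁻¹ * (1 + ‖y‖ / τ) ^ (-b))

/-- The total mass of the majorants with exponent `b`, which does not depend on the scale. -/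
def majorantMass (n : ℕ) (b : ℝ) : ℝ≥0∞ := ∫⁻ y : Euc n, ENNReal.ofReal ((1 + ‖y‖) ^ (-b))

/-- The average of a nonnegative function against a majorant, i.e. the convolution
`majorant b τ * F`. -/
def majorantConv {n : ℕ} (b τ : ℝ) (F : Euc n → ℝ≥0∞) (x : Euc n) : ℝ≥0∞ :=
  ∫⁻ y, majorant b τ (x - y) * F y

section majorant

variable {n : ℕ} {b s τ : ℝ}

theorem measurable_majorant : Measurable (majorant (n := n) b τ) := by
  unfold majorant
  fun_prop

theorem majorant_ne_top (y : Euc n) : majorant b τ y ≠ ⊤ := ENNReal.ofReal_ne_top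

theorem majorant_anti {a : ℝ} (hba : b ≤ a) (hτ : 0 < τ) (y : Euc n) :
    majorant a τ y ≤ majorant b τ y := by
  have hone : 1 ≤ 1 + ‖y‖ / τ := le_add_of_nonneg_right (by positivity)
  unfold majorant
  gcongr

theorem majorantMass_ne_top (hb : n < b) : majorantMass n b ≠ ⊤ :=
  (finite_integral_one_add_norm (E := Euc n) (by simpa using hb)).ne

theorem lintegral_comp_const_smul {f : Euc n → ℝ≥0∞} (hf : Measurable f) {r : ℝ} (hr : 0 < r) :
    ∫⁻ y, f (r • y) = ENNReal.ofReal ((r ^ n)⁻¹) * ∫⁻ y, f y := by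
  rw [← lintegral_map (g := fun y : Euc n => r • y) hf (by fun_prop),
    Measure.map_addHaar_smul volume hr.ne', lintegral_smul_measure, smul_eq_mul,
    finrank_euclideanSpace, Fintype.card_fin, abs_of_pos (by positivity)]

theorem lintegral_majorant (hτ : 0 < τ) :
    ∫⁻ y : Euc n, majorant b τ y = majorantMass n b := by
  have hscale : ∀ y : Euc n, majorant b τ y =
      ENNReal.ofReal ((τ ^ n)⁻¹) * ENNReal.ofReal ((1 + ‖τ⁻¹ • y‖) ^ (-b)) := fun y => by
    rw [majorant, ENNReal.ofReal_mul (by positivity), norm_smul, norm_inv,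
      Real.norm_of_nonneg hτ.le, inv_mul_eq_div]
  simp only [hscale]
  rw [lintegral_const_mul' _ _ ENNReal.ofReal_ne_top,
    lintegral_comp_const_smul (f := fun y : Euc n => ENNReal.ofReal ((1 + ‖y‖) ^ (-b)))
      (by fun_prop) (inv_pos.2 hτ), ← mul_assoc, ← ENNReal.ofReal_mul (by positivity),
    ← mul_inv, ← mul_pow, mul_inv_cancel₀ hτ.ne', one_pow, inv_one, ENNReal.ofReal_one, one_mul,
    majorantMass]

theorem lintegral_majorant_sub_left (hτ : 0 < τ) (x : Euc n) :
    ∫⁻ y, majorant b τ (x - y) = majorantMass n b := by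
  rw [lintegral_sub_left_eq_self (majorant b τ) x, lintegral_majorant hτ]

theorem ofReal_mul_rpow_le_majorant (hb : 0 ≤ b) (hτ : 0 < τ) {q : ℝ} (hq : 0 < q) {z : Euc n}
    (hz : 1 + ‖z‖ / τ ≤ 2 * q) :
    ENNReal.ofReal ((τ ^ n)⁻¹ * q ^ (-b)) ≤ ENNReal.ofReal (2 ^ b) * majorant b τ z := by
  rw [majorant, ← ENNReal.ofReal_mul (by positivity)]
  refine ENNReal.ofReal_le_ofReal ?_
  calc (τ ^ n)⁻¹ * q ^ (-b) = 2 ^ b * ((τ ^ n)⁻¹ * (2 * q) ^ (-b)) := by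
        have hcancel : (2 : ℝ) ^ b * 2 ^ (-b) = 1 := by rw [← Real.rpow_add two_pos]; simp
        rw [Real.mul_rpow two_pos.le hq.le]
        linear_combination (-(τ ^ n)⁻¹ * q ^ (-b)) * hcancel
    _ ≤ 2 ^ b * ((τ ^ n)⁻¹ * (1 + ‖z‖ / τ) ^ (-b)) := by
      gcongr 2 ^ b * ((τ ^ n)⁻¹ * ?_)
      exact Real.rpow_le_rpow_of_nonpos (by positivity) hz (by linarith)

theorem majorant_le_of_scale_le (hb : n ≤ b) (hs : 0 < s) (hsτ : s ≤ τ) {v : Euc n} (hv : v ≠ 0) :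
    majorant b s v ≤ ENNReal.ofReal ((τ ^ n)⁻¹ * (‖v‖ / τ) ^ (-b)) := by
  have hv₀ : 0 < ‖v‖ := norm_pos_iff.2 hv
  have hscale : ∀ r : ℝ, 0 < r → (r ^ n)⁻¹ * (‖v‖ / r) ^ (-b) = r ^ (b - n) * ‖v‖ ^ (-b) :=
    fun r hr => by
      rw [Real.div_rpow hv₀.le hr.le, Real.rpow_sub hr, Real.rpow_neg hr.le, Real.rpow_natCast]
      field_simp
  refine ENNReal.ofReal_le_ofReal ?_
  calc (s ^ n)⁻¹ * (1 + ‖v‖ / s) ^ (-b) ≤ (s ^ n)⁻¹ * (‖v‖ / s) ^ (-b) := by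
        gcongr (s ^ n)⁻¹ * ?_
        exact Real.rpow_le_rpow_of_nonpos (by positivity) (by linarith)
          (by linarith [n.cast_nonneg (α := ℝ)])
    _ = s ^ (b - n) * ‖v‖ ^ (-b) := hscale s hs
    _ ≤ τ ^ (b - n) * ‖v‖ ^ (-b) := by gcongr
    _ = (τ ^ n)⁻¹ * (‖v‖ / τ) ^ (-b) := (hscale τ (hs.trans_le hsτ)).symm

-- One of `v`, `y` is at least half as large as `v + y`, measured from scale `τ` on.
theorem majorant_mul_majorant_le (hb : n ≤ b) (hs : 0 < s) (hsτ : s ≤ τ) (v y : Euc n) :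
    majorant b s v * majorant b τ y ≤
      ENNReal.ofReal (2 ^ b) * majorant b τ (v + y) * (majorant b s v + majorant b τ y) := by
  have hτ : 0 < τ := hs.trans_le hsτ
  have hb₀ : 0 ≤ b := n.cast_nonneg.trans hb
  have htriangle : ‖v + y‖ / τ ≤ ‖v‖ / τ + ‖y‖ / τ := by
    rw [← add_div]
    gcongr
    exact norm_add_le v y
  have hy₀ : 0 ≤ ‖y‖ / τ := by positivity
  rcases le_total (‖v‖ / τ) (1 + ‖y‖ / τ) with hvy | hyv
  · have hy : majorant b τ y ≤ ENNReal.ofReal (2 ^ b) * majorant b τ (v + y) :=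
      ofReal_mul_rpow_le_majorant hb₀ hτ (by positivity) (by linarith)
    rw [mul_comm (majorant b s v)]
    gcongr
    exact le_self_add
  · have hv₀ : 0 < ‖v‖ / τ := by linarith
    have hv : majorant b s v ≤ ENNReal.ofReal (2 ^ b) * majorant b τ (v + y) :=
      (majorant_le_of_scale_le hb hs hsτ (by rintro rfl; simp at hv₀)).trans
        (ofReal_mul_rpow_le_majorant hb₀ hτ hv₀ (by linarith))
    gcongr
    exact le_add_self

theorem lintegral_majorant_mul_majorant_le (hb : n ≤ b) (hs : 0 < s) (hsτ : s ≤ τ) (x z : Euc n) :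
    ∫⁻ y, majorant b s (x - y) * majorant b τ (y - z) ≤
      ENNReal.ofReal (2 ^ b) * (2 * majorantMass n b) * majorant b τ (x - z) := by
  have hms : Measurable fun y => majorant b s (x - y) := measurable_majorant.comp (by fun_prop)
  calc ∫⁻ y, majorant b s (x - y) * majorant b τ (y - z)
      ≤ ∫⁻ y, ENNReal.ofReal (2 ^ b) * majorant b τ (x - z) *
          (majorant b s (x - y) + majorant b τ (y - z)) := lintegral_mono fun y => by
        simpa only [sub_add_sub_cancel] using majorant_mul_majorant_le hb hs hsτ (x - y) (y - z)
    _ = ENNReal.ofReal (2 ^ b) * (2 * majorantMass n b) * majorant b τ (x - z) := by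
      rw [lintegral_const_mul' _ _ (ENNReal.mul_ne_top ENNReal.ofReal_ne_top (majorant_ne_top _)),
        lintegral_add_left hms, lintegral_majorant_sub_left hs,
        lintegral_sub_right_eq_self (majorant b τ) z, lintegral_majorant (hs.trans_le hsτ)]
      ring

theorem majorantConv_mono {F G : Euc n → ℝ≥0∞} (hFG : ∀ y, F y ≤ G y) (x : Euc n) :
    majorantConv b τ F x ≤ majorantConv b τ G x :=
  lintegral_mono fun y => mul_le_mul_right (hFG y) _

theorem aemeasurable_majorant_mul {F : Euc n → ℝ≥0∞} (hF : AEMeasurable F) :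
    AEMeasurable (fun q : Euc n × Euc n => majorant b τ (q.1 - q.2) * F q.2)
      (volume.prod volume) :=
  (measurable_majorant.comp (by fun_prop)).aemeasurable.mul
    (hF.comp_quasiMeasurePreserving Measure.quasiMeasurePreserving_snd)

theorem aemeasurable_majorantConv {F : Euc n → ℝ≥0∞} (hF : AEMeasurable F) :
    AEMeasurable (majorantConv b τ F) :=
  (aemeasurable_majorant_mul hF).lintegral_prod_right'

theorem majorantConv_const_mul (c : ℝ≥0∞) {F : Euc n → ℝ≥0∞} (hF : AEMeasurable F) (x : Euc n) :
    majorantConv b τ (fun y => c * F y) x = c * majorantConv b τ F x := by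
  unfold majorantConv
  rw [← lintegral_const_mul'' c]
  · simp only [mul_left_comm]
  · exact (measurable_majorant.comp (by fun_prop)).aemeasurable.mul hF

theorem majorantConv_majorantConv_le (hb : n ≤ b) (hs : 0 < s) (hsτ : s ≤ τ) {F : Euc n → ℝ≥0∞}
    (hF : AEMeasurable F) (x : Euc n) : majorantConv b s (majorantConv b τ F) x ≤
      ENNReal.ofReal (2 ^ b) * (2 * majorantMass n b) * majorantConv b τ F x := by
  have hms : Measurable fun q : Euc n × Euc n => majorant b s (x - q.1) :=
    measurable_majorant.comp (by fun_prop)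
  calc majorantConv b s (majorantConv b τ F) x
      = ∫⁻ y, ∫⁻ z, majorant b s (x - y) * (majorant b τ (y - z) * F z) :=
        lintegral_congr fun y => (lintegral_const_mul' _ _ (majorant_ne_top _)).symm
    _ = ∫⁻ z, ∫⁻ y, majorant b s (x - y) * majorant b τ (y - z) * F z := by
      simp only [mul_assoc]
      exact lintegral_lintegral_swap (hms.aemeasurable.mul (aemeasurable_majorant_mul hF))
    _ = ∫⁻ z, (∫⁻ y, majorant b s (x - y) * majorant b τ (y - z)) * F z :=
      lintegral_congr fun z => lintegral_mul_const _ (Measurable.mul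
        (measurable_majorant.comp (by fun_prop)) (measurable_majorant.comp (by fun_prop)))
    _ ≤ ∫⁻ z, ENNReal.ofReal (2 ^ b) * (2 * majorantMass n b) * majorant b τ (x - z) * F z := by
      gcongr with z
      exact lintegral_majorant_mul_majorant_le hb hs hsτ x z
    _ = ENNReal.ofReal (2 ^ b) * (2 * majorantMass n b) * majorantConv b τ F x := by
      simp only [mul_assoc _ (majorant b τ _)]
      exact lintegral_const_mul'' _ ((measurable_majorant.comp (by fun_prop)).aemeasurable.mul hF)

end majorant

/-! ### The maximal function -/

/-- The centred Hardy–Littlewood maximal function over balls, with averages normalised by the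
power `ρⁿ` of the radius instead of the volume. -/
def ballMax {n : ℕ} (h : Euc n → ℝ≥0∞) (x : Euc n) : ℝ≥0∞ :=
  ⨆ (ρ : ℝ) (_ : 0 < ρ), ENNReal.ofReal ((ρ ^ n)⁻¹) * ∫⁻ y in Metric.closedBall x ρ, h y

section ballMax

variable {n : ℕ} {b q s τ : ℝ}

theorem ofReal_mul_setLIntegral_le_ballMax (hτ : 0 < τ) (h : Euc n → ℝ≥0∞) (x u : Euc n) :
    ENNReal.ofReal ((τ ^ n)⁻¹) * ∫⁻ z in Metric.closedBall u τ, h z ≤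
      ENNReal.ofReal ((1 + ‖x - u‖ / τ) ^ n) * ballMax h x := by
  set ρ := τ + ‖x - u‖ with hρ
  have hρ₀ : 0 < ρ := by positivity
  have hsub : Metric.closedBall u τ ⊆ Metric.closedBall x ρ :=
    Metric.closedBall_subset_closedBall' (by rw [dist_comm, dist_eq_norm])
  calc ENNReal.ofReal ((τ ^ n)⁻¹) * ∫⁻ z in Metric.closedBall u τ, h z
      ≤ ENNReal.ofReal ((τ ^ n)⁻¹) * ∫⁻ z in Metric.closedBall x ρ, h z := by
        gcongr
    _ = ENNReal.ofReal ((1 + ‖x - u‖ / τ) ^ n) *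
        (ENNReal.ofReal ((ρ ^ n)⁻¹) * ∫⁻ z in Metric.closedBall x ρ, h z) := by
      rw [← mul_assoc, ← ENNReal.ofReal_mul (by positivity)]
      congr 2
      rw [← inv_pow, ← inv_pow, ← mul_pow, hρ]
      congr 1
      field_simp
    _ ≤ ENNReal.ofReal ((1 + ‖x - u‖ / τ) ^ n) * ballMax h x := by
      gcongr
      exact le_iSup₂_of_le ρ hρ₀ le_rfl

theorem ofReal_mul_setLIntegral_le_majorantConv (hb : 0 ≤ b) (hτ : 0 < τ) (h : Euc n → ℝ≥0∞)
    (u : Euc n) : ENNReal.ofReal ((τ ^ n)⁻¹) * ∫⁻ z in Metric.closedBall u τ, h z ≤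
      ENNReal.ofReal (2 ^ b) * majorantConv b τ h u := by
  rw [majorantConv, ← lintegral_const_mul' _ _ ENNReal.ofReal_ne_top,
    ← lintegral_const_mul' _ _ ENNReal.ofReal_ne_top]
  refine (setLIntegral_mono' measurableSet_closedBall fun z hz => ?_).trans
    (setLIntegral_le_lintegral (Metric.closedBall u τ) _)
  have hz' : ‖u - z‖ / τ ≤ 1 := by
    rwa [div_le_one hτ, ← dist_eq_norm, dist_comm, ← Metric.mem_closedBall]
  rw [← mul_assoc]
  gcongr
  simpa using ofReal_mul_rpow_le_majorant (z := u - z) hb hτ one_pos (by linarith)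

theorem le_setLIntegral_closedBall (hτ : 0 < τ) {h : Euc n → ℝ≥0∞} {u : Euc n} {a : ℝ≥0∞}
    (ha : ∀ z, ‖z - u‖ ≤ τ → a ≤ h z) : a ≤ (volume (Metric.ball (0 : Euc n) 1))⁻¹ *
      (ENNReal.ofReal ((τ ^ n)⁻¹) * ∫⁻ z in Metric.closedBall u τ, h z) := by
  set v := volume (Metric.ball (0 : Euc n) 1)
  have hv : v⁻¹ * v = 1 :=
    ENNReal.inv_mul_cancel (Metric.measure_ball_pos volume _ one_pos).ne' measure_ball_lt_top.ne
  have hτn : ENNReal.ofReal ((τ ^ n)⁻¹) * ENNReal.ofReal (τ ^ n) = 1 := by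
    rw [← ENNReal.ofReal_mul (by positivity), inv_mul_cancel₀ (by positivity), ENNReal.ofReal_one]
  calc a = v⁻¹ * v * (ENNReal.ofReal ((τ ^ n)⁻¹) * ENNReal.ofReal (τ ^ n)) * a := by
        rw [hv, hτn, one_mul, one_mul]
    _ = v⁻¹ * (ENNReal.ofReal ((τ ^ n)⁻¹) * ∫⁻ _ in Metric.closedBall u τ, a) := by
      rw [setLIntegral_const, Measure.addHaar_closedBall _ _ hτ.le, finrank_euclideanSpace,
        Fintype.card_fin]
      ring
    _ ≤ v⁻¹ * (ENNReal.ofReal ((τ ^ n)⁻¹) * ∫⁻ z in Metric.closedBall u τ, h z) := by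
      refine mul_le_mul_right (mul_le_mul_right ?_ _) _
      exact setLIntegral_mono' measurableSet_closedBall fun z hz =>
        ha z (by rwa [Metric.mem_closedBall, dist_eq_norm] at hz)

theorem majorant_le_tsum_indicator (hb : 0 ≤ b) (hτ : 0 < τ) (y : Euc n) :
    majorant b τ y ≤ ∑' k : ℕ, (Metric.closedBall 0 (2 ^ k * τ)).indicator
      (fun _ => ENNReal.ofReal (2 ^ b * (2 ^ (n - b)) ^ k) *
        ENNReal.ofReal (((2 ^ k * τ) ^ n)⁻¹)) y := by
  have hone : 1 ≤ 1 + ‖y‖ / τ := le_add_of_nonneg_right (by positivity)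
  obtain ⟨k, hk, hk'⟩ := exists_nat_pow_near hone one_lt_two
  refine le_trans ?_ (ENNReal.le_tsum (k + 1))
  have hmem : y ∈ Metric.closedBall (0 : Euc n) (2 ^ (k + 1) * τ) := by
    rw [mem_closedBall_zero_iff, ← div_le_iff₀ hτ]
    linarith
  rw [indicator_of_mem hmem, ← ENNReal.ofReal_mul (by positivity)]
  refine ENNReal.ofReal_le_ofReal ?_
  have hpow : ((2 : ℝ) ^ (n - b)) ^ (k + 1) = (2 ^ (k + 1)) ^ n * (2 ^ (-b) * (2 ^ k) ^ (-b)) := by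
    rw [← Real.mul_rpow two_pos.le (by positivity), ← pow_succ', ← Real.rpow_natCast,
      ← Real.rpow_mul two_pos.le, mul_comm, Real.rpow_mul two_pos.le, Real.rpow_natCast,
      sub_eq_add_neg, Real.rpow_add (by positivity), Real.rpow_natCast]
  have hcancel : (2 : ℝ) ^ b * 2 ^ (-b) = 1 := by rw [← Real.rpow_add two_pos]; simp
  calc (τ ^ n)⁻¹ * (1 + ‖y‖ / τ) ^ (-b) ≤ (τ ^ n)⁻¹ * (2 ^ k) ^ (-b) := by
        gcongr (τ ^ n)⁻¹ * ?_
        exact Real.rpow_le_rpow_of_nonpos (by positivity) hk (by linarith)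
    _ = 2 ^ b * (2 ^ (n - b)) ^ (k + 1) * ((2 ^ (k + 1) * τ) ^ n)⁻¹ := by
      rw [hpow, mul_pow _ τ, ← one_mul ((τ ^ n)⁻¹ * _), ← hcancel]
      field_simp

theorem exists_majorantConv_le_ballMax (hb : n < b) : ∃ C : ℝ≥0∞, C ≠ ⊤ ∧
    ∀ τ : ℝ, 0 < τ → ∀ h : Euc n → ℝ≥0∞, Measurable h → ∀ x,
      majorantConv b τ h x ≤ C * ballMax h x := by
  have hb₀ : 0 ≤ b := n.cast_nonneg.trans hb.le
  have hsum : Summable fun k : ℕ => (2 : ℝ) ^ b * (2 ^ (n - b)) ^ k :=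
    (summable_geometric_of_lt_one (by positivity)
      (Real.rpow_lt_one_of_one_lt_of_neg one_lt_two (by linarith))).mul_left _
  refine ⟨∑' k : ℕ, ENNReal.ofReal (2 ^ b * (2 ^ (n - b)) ^ k), ?_, fun τ hτ h hh x => ?_⟩
  · rw [← ENNReal.ofReal_tsum_of_nonneg (fun k => by positivity) hsum]
    exact ENNReal.ofReal_ne_top
  set c : ℕ → ℝ≥0∞ := fun k => ENNReal.ofReal (2 ^ b * (2 ^ (n - b)) ^ k)
  set d : ℕ → ℝ≥0∞ := fun k => ENNReal.ofReal (((2 ^ k * τ) ^ n)⁻¹)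
  have hpoint : ∀ z, majorant b τ (x - z) * h z ≤
      ∑' k : ℕ, (Metric.closedBall x (2 ^ k * τ)).indicator (fun z => c k * (d k * h z)) z := by
    intro z
    refine (mul_le_mul_left (majorant_le_tsum_indicator hb₀ hτ (x - z)) _).trans_eq ?_
    rw [← ENNReal.tsum_mul_right]
    refine tsum_congr fun k => ?_
    have hiff : x - z ∈ Metric.closedBall 0 (2 ^ k * τ) ↔ z ∈ Metric.closedBall x (2 ^ k * τ) := by
      rw [mem_closedBall_zero_iff, Metric.mem_closedBall, dist_comm, dist_eq_norm]
    by_cases hz : z ∈ Metric.closedBall x (2 ^ k * τ)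
    · rw [indicator_of_mem (hiff.2 hz), indicator_of_mem hz, mul_assoc]
    · rw [indicator_of_notMem (mt hiff.1 hz), indicator_of_notMem hz, zero_mul]
  refine (lintegral_mono hpoint).trans ?_
  rw [lintegral_tsum fun k => Measurable.aemeasurable
    (((hh.const_mul _).const_mul _).indicator measurableSet_closedBall), ← ENNReal.tsum_mul_right]
  refine ENNReal.tsum_le_tsum fun k => ?_
  rw [lintegral_indicator measurableSet_closedBall, lintegral_const_mul _ (hh.const_mul _),
    lintegral_const_mul _ hh]
  gcongr
  exact le_iSup₂_of_le (2 ^ k * τ) (by positivity) le_rfl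

theorem majorant_mul_rpow_le {κ : ℝ} (hκ : 0 ≤ κ) (hs : 0 < s) (hsτ : s ≤ τ) (v : Euc n) :
    majorant b s v * ENNReal.ofReal ((1 + ‖v‖ / τ) ^ n) ^ κ ≤ majorant (b - n * κ) s v := by
  have hτ : 0 < τ := hs.trans_le hsτ
  have hpos : 0 < 1 + ‖v‖ / s := by positivity
  rw [majorant, majorant, ENNReal.ofReal_rpow_of_nonneg (by positivity) hκ,
    ← ENNReal.ofReal_mul (by positivity), mul_assoc]
  refine ENNReal.ofReal_le_ofReal (mul_le_mul_of_nonneg_left ?_ (by positivity))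
  calc (1 + ‖v‖ / s) ^ (-b) * ((1 + ‖v‖ / τ) ^ n) ^ κ
      ≤ (1 + ‖v‖ / s) ^ (-b) * ((1 + ‖v‖ / s) ^ n) ^ κ := by gcongr
    _ = (1 + ‖v‖ / s) ^ (-(b - n * κ)) := by
      rw [← Real.rpow_natCast, ← Real.rpow_mul hpos.le, ← Real.rpow_add hpos]
      ring_nf

theorem le_rpow_mul_of_rpow_le (hq₀ : 0 < q) (hq₁ : q ≤ 1) {a D E : ℝ≥0∞} (hD : a ^ q ≤ D)
    (hE : a ^ q ≤ E) : a ≤ D ^ ((1 - q) / q) * E := by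
  have hκ : 0 ≤ (1 - q) / q := div_nonneg (by linarith) hq₀.le
  calc a = (a ^ q) ^ ((1 - q) / q) * a ^ q := by
        rw [← ENNReal.rpow_mul, mul_div_cancel₀ _ hq₀.ne',
          ← ENNReal.rpow_add_of_nonneg _ _ (by linarith) hq₀.le, sub_add_cancel, ENNReal.rpow_one]
    _ ≤ D ^ ((1 - q) / q) * E := by gcongr

theorem le_ballMax_rpow_mul_majorantConv (hq₀ : 0 < q) (hq₁ : q ≤ 1) (hb : 0 ≤ b) (hτ : 0 < τ)
    {G : Euc n → ℝ≥0∞} {a : ℝ≥0∞} {u : Euc n} (ha : ∀ z, ‖z - u‖ ≤ τ → a ≤ G z) (x : Euc n) :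
    a ≤ ((volume (Metric.ball (0 : Euc n) 1))⁻¹ *
        (ENNReal.ofReal ((1 + ‖x - u‖ / τ) ^ n) * ballMax (fun z => G z ^ q) x)) ^ ((1 - q) / q) *
      ((volume (Metric.ball (0 : Euc n) 1))⁻¹ *
        (ENNReal.ofReal (2 ^ b) * majorantConv b τ (fun z => G z ^ q) u)) := by
  have havg := le_setLIntegral_closedBall hτ fun z hz => ENNReal.rpow_le_rpow (ha z hz) hq₀.le
  exact le_rpow_mul_of_rpow_le hq₀ hq₁
    (havg.trans (mul_le_mul_right (ofReal_mul_setLIntegral_le_ballMax hτ _ x u) _))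
    (havg.trans (mul_le_mul_right (ofReal_mul_setLIntegral_le_majorantConv hb hτ _ u) _))

-- The exponent `b > n / q` suffices because only `F ^ q` is averaged: the remaining factor
-- `F ^ (1 - q)` is estimated pointwise.
theorem exists_majorantConv_le_ballMax_rpow (hq₀ : 0 < q) (hq₁ : q ≤ 1) (hb : n / q < b) :
    ∃ C : ℝ≥0∞, C ≠ ⊤ ∧ ∀ s τ : ℝ, 0 < s → s ≤ τ → ∀ F G : Euc n → ℝ≥0∞, Measurable G →
      (∀ u z, ‖z - u‖ ≤ τ → F u ≤ G z) → ∀ x,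
        majorantConv b s F x ≤ C * ballMax (fun z => G z ^ q) x ^ (1 / q) := by
  set κ := (1 - q) / q with hκ
  have hκ₀ : 0 ≤ κ := div_nonneg (by linarith) hq₀.le
  set b' := b - n * κ
  have hb'n : n < b' := by
    have : (n : ℝ) * κ = n / q - n := by rw [hκ]; field_simp
    linarith
  obtain ⟨C₁, hC₁, hmax⟩ := exists_majorantConv_le_ballMax hb'n
  set v := (volume (Metric.ball (0 : Euc n) 1))⁻¹
  have hv : v ≠ ⊤ := ENNReal.inv_ne_top.2 (Metric.measure_ball_pos volume _ one_pos).ne'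
  set A := ENNReal.ofReal (2 ^ b') * (2 * majorantMass n b')
  have hA : A ≠ ⊤ := by have := majorantMass_ne_top hb'n; finiteness
  set K := v ^ κ * (v * ENNReal.ofReal (2 ^ b'))
  have hK : K ≠ ⊤ := by have := ENNReal.rpow_ne_top_of_nonneg hκ₀ hv; finiteness
  refine ⟨K * (A * C₁), by finiteness, fun s τ hs hsτ F G hG hFG x => ?_⟩
  have hτ : 0 < τ := hs.trans_le hsτ
  have hGq : Measurable fun z => G z ^ q := hG.pow_const q
  set M := ballMax (fun z => G z ^ q) x
  set J := majorantConv b' τ fun z => G z ^ q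
  have hpoint : ∀ u, majorant b s (x - u) * F u ≤
      majorant b' s (x - u) * (K * M ^ κ * J u) := fun u => by
    refine (mul_le_mul_right (le_ballMax_rpow_mul_majorantConv hq₀ hq₁
      (n.cast_nonneg.trans hb'n.le) hτ (hFG u) x) _).trans ?_
    rw [ENNReal.mul_rpow_of_nonneg _ _ hκ₀, ENNReal.mul_rpow_of_nonneg _ _ hκ₀]
    calc _ = majorant b s (x - u) * ENNReal.ofReal ((1 + ‖x - u‖ / τ) ^ n) ^ κ *
          (K * M ^ κ * J u) := by ring
      _ ≤ majorant b' s (x - u) * (K * M ^ κ * J u) := by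
        gcongr
        exact majorant_mul_rpow_le hκ₀ hs hsτ _
  calc majorantConv b s F x ≤ majorantConv b' s (fun u => K * M ^ κ * J u) x :=
        lintegral_mono hpoint
    _ = K * M ^ κ * majorantConv b' s J x :=
      majorantConv_const_mul _ (aemeasurable_majorantConv hGq.aemeasurable) x
    _ ≤ K * M ^ κ * (A * (C₁ * M)) := by
      gcongr
      exact (majorantConv_majorantConv_le hb'n.le hs hsτ hGq.aemeasurable x).trans
        (mul_le_mul_right (hmax τ hτ _ hGq x) A)
    _ = K * (A * C₁) * (M ^ κ * M) := by ring
    _ = K * (A * C₁) * M ^ (1 / q) := by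
      have hexp : κ + 1 = 1 / q := by rw [hκ]; field_simp; ring
      rw [← hexp, ENNReal.rpow_add_of_nonneg _ _ hκ₀ zero_le_one, ENNReal.rpow_one]

end ballMax

/-! ### `A₁` weights and the weak type `(1, 1)` inequality -/

section cube

variable {n : ℕ}

theorem isClosed_cube (x : Euc n) (r : ℝ) : IsClosed (cube x r) := by
  have hInter : cube x r = ⋂ i, {y : Euc n | |y i - x i| ≤ r / 2} := by ext; simp [cube]
  rw [hInter]
  exact isClosed_iInter fun i => isClosed_le (by fun_prop) continuous_const

theorem closedBall_subset_cube (x : Euc n) (ρ : ℝ) : Metric.closedBall x ρ ⊆ cube x (2 * ρ) := by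
  intro y hy i
  have hi : |y i - x i| ≤ ‖y - x‖ := by simpa using PiLp.norm_apply_le (y - x) i
  rw [mem_closedBall_iff_norm] at hy
  linarith

theorem isCompact_cube (x : Euc n) (r : ℝ) : IsCompact (cube x r) := by
  have hpi : cube x r = WithLp.ofLp ⁻¹' Set.pi univ fun i => Metric.closedBall (x i) (r / 2) := by
    ext y
    simp [cube, Real.dist_eq]
  rw [hpi]
  exact (PiLp.homeomorph 2 fun _ : Fin n => ℝ).isCompact_preimage.2
    (isCompact_univ_pi fun i => isCompact_closedBall _ _)

end cube

section IsA1

variable {n : ℕ} {w : Euc n → ℝ}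

theorem IsA1.aemeasurable (hw : IsA1 w) : AEMeasurable (fun x => ENNReal.ofReal (w x)) volume :=
  hw.2.1.aestronglyMeasurable.aemeasurable.ennreal_ofReal

theorem IsA1.wMeasure_cube (hw : IsA1 w) (x : Euc n) (r : ℝ) :
    wMeasure w (cube x r) = ENNReal.ofReal (∫ y in cube x r, w y) := by
  rw [wMeasure, withDensity_apply _ (isClosed_cube x r).measurableSet,
    ofReal_integral_eq_lintegral_ofReal (hw.2.1.integrableOn_isCompact (isCompact_cube x r))
      (.of_forall hw.1)]

theorem IsA1.ae_essInf_cube_le (hw : IsA1 w) (x : Euc n) (r : ℝ) :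
    ∀ᵐ y, y ∈ cube x r → essInf w (volume.restrict (cube x r)) ≤ w y :=
  ae_imp_of_ae_restrict (ae_essInf_le (Filter.isBoundedUnder_of ⟨0, hw.1⟩))

theorem IsA1.exists_wMeasure_closedBall_le (hw : IsA1 w) :
    ∃ A : ℝ, ∀ (x : Euc n) (ρ : ℝ), 0 < ρ → ∀ᵐ y, y ∈ Metric.closedBall x ρ →
      wMeasure w (Metric.closedBall x (5 * ρ)) ≤ ENNReal.ofReal (A * ρ ^ n * w y) := by
  obtain ⟨C, hC, hcube⟩ := hw.2.2
  refine ⟨C * 10 ^ n, fun x ρ hρ => ?_⟩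
  set Q := cube x (2 * (5 * ρ))
  have hmean : ∫ y in Q, w y ≤ C * essInf w (volume.restrict Q) * (2 * (5 * ρ)) ^ n :=
    (div_le_iff₀ (by positivity)).1 (hcube x (2 * (5 * ρ)) (by positivity))
  filter_upwards [hw.ae_essInf_cube_le x (2 * (5 * ρ))] with y hy hyρ
  have hyQ : y ∈ Q :=
    closedBall_subset_cube x _ (Metric.closedBall_subset_closedBall (by linarith) hyρ)
  calc wMeasure w (Metric.closedBall x (5 * ρ)) ≤ wMeasure w Q :=
        measure_mono (closedBall_subset_cube x _)
    _ = ENNReal.ofReal (∫ y in Q, w y) := hw.wMeasure_cube x _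
    _ ≤ ENNReal.ofReal (C * 10 ^ n * ρ ^ n * w y) := by
      refine ENNReal.ofReal_le_ofReal (hmean.trans ?_)
      calc C * essInf w (volume.restrict Q) * (2 * (5 * ρ)) ^ n
          ≤ C * w y * (2 * (5 * ρ)) ^ n := by gcongr; exact hy hyQ
        _ = C * 10 ^ n * ρ ^ n * w y := by rw [← mul_assoc 2, mul_pow]; norm_num; ring

theorem IsA1.setLIntegral_wMeasure (hw : IsA1 w) {h : Euc n → ℝ≥0∞} (hh : Measurable h)
    {s : Set (Euc n)} (hs : MeasurableSet s) :
    ∫⁻ y in s, h y ∂(wMeasure w) = ∫⁻ y in s, ENNReal.ofReal (w y) * h y := by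
  rw [wMeasure, restrict_withDensity hs,
    lintegral_withDensity_eq_lintegral_mul₀ hw.aemeasurable.restrict hh.aemeasurable]
  simp only [Pi.mul_apply]

theorem IsA1.exists_setLIntegral_mul_wMeasure_le (hw : IsA1 w) :
    ∃ A : ℝ≥0∞, A ≠ ⊤ ∧ ∀ (x : Euc n) (ρ : ℝ), 0 < ρ → ∀ h : Euc n → ℝ≥0∞, Measurable h →
      (ENNReal.ofReal ((ρ ^ n)⁻¹) * ∫⁻ y in Metric.closedBall x ρ, h y) *
          wMeasure w (Metric.closedBall x (5 * ρ)) ≤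
        A * ∫⁻ y in Metric.closedBall x ρ, h y ∂(wMeasure w) := by
  obtain ⟨A, hball⟩ := hw.exists_wMeasure_closedBall_le
  refine ⟨ENNReal.ofReal A, ENNReal.ofReal_ne_top, fun x ρ hρ h hh => ?_⟩
  set m := wMeasure w (Metric.closedBall x (5 * ρ))
  rw [mul_assoc, ← lintegral_mul_const _ hh, hw.setLIntegral_wMeasure hh measurableSet_closedBall,
    ← lintegral_const_mul' _ _ ENNReal.ofReal_ne_top,
    ← lintegral_const_mul' _ _ ENNReal.ofReal_ne_top]
  refine lintegral_mono_ae ((ae_restrict_iff' measurableSet_closedBall).2 ?_)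
  filter_upwards [hball x ρ hρ] with y hy hyρ
  calc ENNReal.ofReal ((ρ ^ n)⁻¹) * (h y * m)
      ≤ ENNReal.ofReal ((ρ ^ n)⁻¹) * (h y * ENNReal.ofReal (A * ρ ^ n * w y)) := by
        gcongr
        exact hy hyρ
    _ = ENNReal.ofReal ((ρ ^ n)⁻¹) * ENNReal.ofReal (ρ ^ n) *
        (ENNReal.ofReal A * (ENNReal.ofReal (w y) * h y)) := by
      rw [ENNReal.ofReal_mul' (hw.1 y), ENNReal.ofReal_mul' (by positivity)]
      ac_rfl
    _ = ENNReal.ofReal A * (ENNReal.ofReal (w y) * h y) := by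
      rw [← ENNReal.ofReal_mul (by positivity), inv_mul_cancel₀ (by positivity),
        ENNReal.ofReal_one, one_mul]

end IsA1

theorem mul_measure_le_lintegral_of_closedBall {α : Type*} [PseudoMetricSpace α]
    [TopologicalSpace.SeparableSpace α] [MeasurableSpace α] [OpensMeasurableSpace α]
    {μ : Measure α} {E : Set α} {Λ : ℝ≥0∞} {g : α → ℝ≥0∞} {K : ℝ}
    (hE : ∀ x ∈ E, ∃ ρ, 0 < ρ ∧ ρ ≤ K ∧
      Λ * μ (Metric.closedBall x (5 * ρ)) ≤ ∫⁻ y in Metric.closedBall x ρ, g y ∂μ) :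
    Λ * μ E ≤ ∫⁻ y, g y ∂μ := by
  choose! r hr₀ hrK hr using hE
  obtain ⟨u, huE, hdisj, hcover⟩ :=
    Vitali.exists_disjoint_subfamily_covering_enlargement_closedBall E id r K hrK 5 (by norm_num)
  have hdisj' : u.PairwiseDisjoint fun a => Metric.closedBall a (r a) := hdisj
  have hcount : u.Countable := hdisj.countable_of_nonempty_interior fun x hx =>
    ⟨x, Metric.ball_subset_interior_closedBall (Metric.mem_ball_self (hr₀ x (huE hx)))⟩
  have hsub : E ⊆ ⋃ x ∈ u, Metric.closedBall x (5 * r x) := fun x hx => by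
    obtain ⟨y, hy, hxy⟩ := hcover x hx
    exact mem_biUnion hy (hxy (Metric.mem_closedBall_self (hr₀ x hx).le))
  calc Λ * μ E ≤ Λ * ∑' x : u, μ (Metric.closedBall (x : α) (5 * r x)) := by
        gcongr
        exact (measure_mono hsub).trans (measure_biUnion_le _ hcount _)
    _ ≤ ∑' x : u, ∫⁻ y in Metric.closedBall (x : α) (r x), g y ∂μ := by
      rw [← ENNReal.tsum_mul_left]
      exact ENNReal.tsum_le_tsum fun x => hr x (huE x.2)
    _ = ∫⁻ y in ⋃ x ∈ u, Metric.closedBall x (r x), g y ∂μ :=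
      (lintegral_biUnion hcount (fun _ _ => measurableSet_closedBall) hdisj' _).symm
    _ ≤ ∫⁻ y, g y ∂μ := setLIntegral_le_lintegral _ _

theorem IsA1.exists_mul_wMeasure_lt_ballMax_le {n : ℕ} {w : Euc n → ℝ} (hw : IsA1 w) :
    ∃ A : ℝ≥0∞, A ≠ ⊤ ∧ ∀ h : Euc n → ℝ≥0∞, Measurable h → ∀ Λ : ℝ≥0∞,
      Λ * wMeasure w {x | Λ < ballMax h x} ≤ A * ∫⁻ y, h y ∂(wMeasure w) := by
  obtain ⟨A, hA, hball⟩ := hw.exists_setLIntegral_mul_wMeasure_le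
  refine ⟨A, hA, fun h hh Λ => ?_⟩
  set E : ℕ → Set (Euc n) := fun k => {x | ∃ ρ : ℝ, 0 < ρ ∧ ρ ≤ k ∧
    Λ < ENNReal.ofReal ((ρ ^ n)⁻¹) * ∫⁻ y in Metric.closedBall x ρ, h y}
  have hmono : Monotone E := fun i j hij x ⟨ρ, hρ, hρi, hlt⟩ =>
    ⟨ρ, hρ, hρi.trans (by exact_mod_cast hij), hlt⟩
  have hsub : {x | Λ < ballMax h x} ⊆ ⋃ k, E k := fun x hx => by
    simp only [ballMax, Set.mem_ofPred_eq, lt_iSup_iff] at hx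
    obtain ⟨ρ, hρ, hlt⟩ := hx
    obtain ⟨k, hk⟩ := exists_nat_ge ρ
    exact mem_iUnion.2 ⟨k, ρ, hρ, hk, hlt⟩
  refine (mul_le_mul_right (measure_mono hsub) _).trans ?_
  rw [hmono.measure_iUnion, ENNReal.mul_iSup, ← lintegral_const_mul A hh]
  refine iSup_le fun k => mul_measure_le_lintegral_of_closedBall (K := k) fun x hx => ?_
  obtain ⟨ρ, hρ, hρk, hlt⟩ := hx
  refine ⟨ρ, hρ, hρk, ?_⟩
  rw [lintegral_const_mul A hh]
  exact (mul_le_mul_left hlt.le _).trans (hball x ρ hρ h hh)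

/-! ### Weak Lebesgue quasinorms -/

section weakNorm

variable {n : ℕ} {μ : Measure (Euc n)} {p q : ℝ}

theorem weakNorm_le_iff (hp : 0 < p) {g : Euc n → ℝ≥0∞} {K : ℝ≥0∞} : weakNorm μ p g ≤ K ↔
    ∀ l : ℝ, 0 < l → μ {x | ENNReal.ofReal l < g x} ≤ ENNReal.ofReal (l ^ (-p)) * K ^ p := by
  have hlevel : ∀ l : ℝ, 0 < l → ∀ m : ℝ≥0∞,
      (ENNReal.ofReal l * m ^ (1 / p) ≤ K ↔ m ≤ ENNReal.ofReal (l ^ (-p)) * K ^ p) := by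
    intro l hl m
    rw [ENNReal.mul_le_iff_le_inv (ENNReal.ofReal_pos.2 hl).ne' ENNReal.ofReal_ne_top,
      one_div, ENNReal.rpow_inv_le_iff hp, ENNReal.mul_rpow_of_nonneg _ _ hp.le, ENNReal.inv_rpow,
      ← ENNReal.rpow_neg, ENNReal.ofReal_rpow_of_pos hl]
  refine iSup₂_le_iff.trans ⟨fun h l hl => ?_, fun h l hl => ?_⟩
  · exact (hlevel l hl _).1 (h l.toNNReal (Real.toNNReal_pos.2 hl))
  · rw [← ENNReal.ofReal_coe_nnreal]
    exact (hlevel l hl _).2 (h l hl)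

theorem weakNorm_mono (hp : 0 ≤ p) {g h : Euc n → ℝ≥0∞} (hgh : ∀ x, g x ≤ h x) :
    weakNorm μ p g ≤ weakNorm μ p h := by
  refine iSup₂_mono fun l _ => ?_
  gcongr with x
  exact hgh x

theorem weakNorm_const_mul_le {c : ℝ≥0} (hc : 0 < c) (g : Euc n → ℝ≥0∞) :
    weakNorm μ p (fun x => c * g x) ≤ c * weakNorm μ p g := by
  refine iSup₂_le fun l hl => ?_
  have hset : {x | (l : ℝ≥0∞) < c * g x} = {x | ((l / c : ℝ≥0) : ℝ≥0∞) < g x} := by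
    ext x
    simp only [Set.mem_ofPred_eq]
    rw [ENNReal.coe_div hc.ne', ENNReal.div_lt_iff (by simp [hc.ne']) (by simp), mul_comm]
  calc (l : ℝ≥0∞) * μ {x | (l : ℝ≥0∞) < c * g x} ^ (1 / p)
      = c * (((l / c : ℝ≥0) : ℝ≥0∞) * μ {x | ((l / c : ℝ≥0) : ℝ≥0∞) < g x} ^ (1 / p)) := by
        rw [hset, ← mul_assoc, ← ENNReal.coe_mul, mul_div_cancel₀ _ hc.ne']
    _ ≤ c * weakNorm μ p g := by
      gcongr
      exact le_iSup₂_of_le (l / c) (by positivity) le_rfl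

theorem rpow_le_tsum_of_le (hq : 0 ≤ q) {s : ℝ} (hs : 0 < s) {a : ℝ≥0∞}
    (ha : ENNReal.ofReal s ≤ a) :
    a ^ q ≤ ∑' k : ℕ, if ENNReal.ofReal (2 ^ k * (s / 2)) < a then
      ENNReal.ofReal ((2 ^ (k + 1) * s) ^ q) else 0 := by
  rcases eq_or_ne a ⊤ with rfl | htop
  · have hterm : ∀ k : ℕ, ENNReal.ofReal (s ^ q) ≤
        if ENNReal.ofReal (2 ^ k * (s / 2)) < ⊤ then
          ENNReal.ofReal ((2 ^ (k + 1) * s) ^ q) else 0 := fun k => by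
      rw [if_pos ENNReal.ofReal_lt_top]
      refine ENNReal.ofReal_le_ofReal (Real.rpow_le_rpow hs.le ?_ hq)
      exact le_mul_of_one_le_left hs.le (one_le_pow₀ one_le_two)
    calc ⊤ ^ q ≤ ⊤ := le_top
      _ = ∑' _ : ℕ, ENNReal.ofReal (s ^ q) :=
        (ENNReal.tsum_const_eq_top_of_ne_zero (ENNReal.ofReal_pos.2 (by positivity)).ne').symm
      _ ≤ _ := ENNReal.tsum_le_tsum hterm
  · lift a to ℝ≥0 using htop
    rw [← ENNReal.ofReal_coe_nnreal, ENNReal.ofReal_le_ofReal_iff a.coe_nonneg] at ha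
    obtain ⟨k, hk, hk'⟩ := exists_nat_pow_near ((one_le_div hs).2 ha) one_lt_two
    rw [le_div_iff₀ hs] at hk
    rw [div_lt_iff₀ hs] at hk'
    have hpos : 0 < 2 ^ k * s := by positivity
    refine le_trans ?_ (ENNReal.le_tsum k)
    rw [← ENNReal.ofReal_coe_nnreal,
      if_pos ((ENNReal.ofReal_lt_ofReal_iff (by linarith)).2 (by linarith)),
      ENNReal.ofReal_rpow_of_nonneg a.coe_nonneg hq]
    exact ENNReal.ofReal_le_ofReal (Real.rpow_le_rpow a.coe_nonneg hk'.le hq)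

theorem dyadic_rpow_mul_rpow {s : ℝ} (hs : 0 < s) (k : ℕ) :
    ((2 : ℝ) ^ (k + 1) * s) ^ q * (2 ^ k * (s / 2)) ^ (-p) =
      2 ^ (q + p) * (2 ^ (q - p)) ^ k * s ^ (q - p) := by
  have hupper : (2 : ℝ) ^ (k + 1) * s = 2 ^ ((k : ℝ) + 1) * s := by
    rw [Real.rpow_add two_pos, Real.rpow_natCast, Real.rpow_one, pow_succ]
  have hlower : (2 : ℝ) ^ k * (s / 2) = 2 ^ ((k : ℝ) - 1) * s := by
    rw [Real.rpow_sub two_pos, Real.rpow_natCast, Real.rpow_one]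
    ring
  rw [hupper, hlower, Real.mul_rpow (by positivity) hs.le, Real.mul_rpow (by positivity) hs.le,
    ← Real.rpow_mul two_pos.le, ← Real.rpow_mul two_pos.le, ← Real.rpow_natCast (2 ^ (q - p)) k,
    ← Real.rpow_mul two_pos.le, mul_mul_mul_comm, ← Real.rpow_add two_pos, ← Real.rpow_add hs,
    ← Real.rpow_add two_pos]
  ring_nf

theorem exists_setLIntegral_rpow_le (hq : 0 ≤ q) (hqp : q < p) :
    ∃ C : ℝ≥0∞, C ≠ ⊤ ∧ ∀ (μ : Measure (Euc n)) (G : Euc n → ℝ≥0∞), Measurable G →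
      ∀ s : ℝ, 0 < s → ∫⁻ x in {x | ENNReal.ofReal s ≤ G x}, G x ^ q ∂μ ≤
        C * ENNReal.ofReal (s ^ (q - p)) * weakNorm μ p G ^ p := by
  have hsum : Summable fun k : ℕ => (2 : ℝ) ^ (q + p) * (2 ^ (q - p)) ^ k :=
    (summable_geometric_of_lt_one (by positivity)
      (Real.rpow_lt_one_of_one_lt_of_neg one_lt_two (by linarith))).mul_left _
  refine ⟨∑' k : ℕ, ENNReal.ofReal (2 ^ (q + p) * (2 ^ (q - p)) ^ k), ?_, fun μ G hG s hs => ?_⟩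
  · rw [← ENNReal.ofReal_tsum_of_nonneg (fun k => by positivity) hsum]
    exact ENNReal.ofReal_ne_top
  set L : ℕ → Set (Euc n) := fun k => {x | ENNReal.ofReal (2 ^ k * (s / 2)) < G x}
  have hL : ∀ k, MeasurableSet (L k) := fun k => measurableSet_lt measurable_const hG
  have hbound : ∀ k, μ (L k) ≤ ENNReal.ofReal ((2 ^ k * (s / 2)) ^ (-p)) * weakNorm μ p G ^ p :=
    fun k => (weakNorm_le_iff (hq.trans_lt hqp)).1 le_rfl _ (by positivity)
  calc ∫⁻ x in {x | ENNReal.ofReal s ≤ G x}, G x ^ q ∂μ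
      ≤ ∫⁻ x, ∑' k, (L k).indicator (fun _ => ENNReal.ofReal ((2 ^ (k + 1) * s) ^ q)) x ∂μ :=
        (setLIntegral_mono' (measurableSet_le measurable_const hG)
          fun x hx => by simpa only [L, indicator_apply, Set.mem_ofPred_eq] using
            rpow_le_tsum_of_le hq hs hx).trans (setLIntegral_le_lintegral _ _)
    _ = ∑' k, ENNReal.ofReal ((2 ^ (k + 1) * s) ^ q) * μ (L k) := by
      rw [lintegral_tsum fun k => (measurable_const.indicator (hL k)).aemeasurable]
      exact tsum_congr fun k => by rw [lintegral_indicator (hL k), setLIntegral_const]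
    _ ≤ ∑' k : ℕ, ENNReal.ofReal (2 ^ (q + p) * (2 ^ (q - p)) ^ k) *
        (ENNReal.ofReal (s ^ (q - p)) * weakNorm μ p G ^ p) := by
      refine ENNReal.tsum_le_tsum fun k => (mul_le_mul_right (hbound k) _).trans_eq ?_
      rw [← mul_assoc, ← mul_assoc, ← ENNReal.ofReal_mul (by positivity),
        ← ENNReal.ofReal_mul (by positivity), dyadic_rpow_mul_rpow hs]
    _ = _ := by rw [ENNReal.tsum_mul_right, mul_assoc]

theorem ballMax_le_add {g h : Euc n → ℝ≥0∞} (hg : Measurable g) {c : ℝ≥0∞}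
    (hle : ∀ y, h y ≤ g y + c) (x : Euc n) :
    ballMax h x ≤ ballMax g x + c * volume (Metric.ball (0 : Euc n) 1) := by
  refine iSup₂_le fun ρ hρ => ?_
  calc ENNReal.ofReal ((ρ ^ n)⁻¹) * ∫⁻ y in Metric.closedBall x ρ, h y
      ≤ ENNReal.ofReal ((ρ ^ n)⁻¹) * ∫⁻ y in Metric.closedBall x ρ, (g y + c) := by
        gcongr with y
        exact hle y
    _ = ENNReal.ofReal ((ρ ^ n)⁻¹) * (∫⁻ y in Metric.closedBall x ρ, g y) +
        (ENNReal.ofReal ((ρ ^ n)⁻¹) * ENNReal.ofReal (ρ ^ n)) *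
          (c * volume (Metric.ball (0 : Euc n) 1)) := by
      rw [lintegral_add_left hg, setLIntegral_const, Measure.addHaar_closedBall _ _ hρ.le,
        finrank_euclideanSpace, Fintype.card_fin]
      ring
    _ ≤ ballMax g x + c * volume (Metric.ball (0 : Euc n) 1) := by
      rw [← ENNReal.ofReal_mul (by positivity), inv_mul_cancel₀ (by positivity),
        ENNReal.ofReal_one, one_mul]
      gcongr
      exact le_iSup₂_of_le ρ hρ le_rfl

-- The values of `G` below `s` contribute at most half of the level.
theorem lt_ballMax_indicator (hq : 0 ≤ q) {G : Euc n → ℝ≥0∞} (hG : Measurable G) {s : ℝ}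
    (hs : 0 ≤ s) {Λ : ℝ≥0∞} (hΛ : ENNReal.ofReal (s ^ q) * volume (Metric.ball (0 : Euc n) 1) = Λ)
    {x : Euc n} (hx : 2 * Λ < ballMax (fun z => G z ^ q) x) :
    Λ < ballMax ({z | ENNReal.ofReal s ≤ G z}.indicator fun z => G z ^ q) x := by
  set g := {z | ENNReal.ofReal s ≤ G z}.indicator fun z => G z ^ q with hg
  have hgm : Measurable g := (hG.pow_const q).indicator (measurableSet_le measurable_const hG)
  have hle : ∀ y, G y ^ q ≤ g y + ENNReal.ofReal (s ^ q) := fun y => by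
    by_cases hy : y ∈ {z | ENNReal.ofReal s ≤ G z}
    · rw [hg, indicator_of_mem hy]
      exact le_self_add
    · rw [Set.mem_ofPred_eq, not_le] at hy
      rw [← ENNReal.ofReal_rpow_of_nonneg hs hq]
      exact le_add_of_nonneg_of_le zero_le (ENNReal.rpow_le_rpow hy.le hq)
  by_contra! hcon
  refine hx.not_ge ((ballMax_le_add hgm hle x).trans ?_)
  rw [hΛ, two_mul]
  gcongr

theorem IsA1.exists_wMeasure_lt_ballMax_rpow_le {w : Euc n → ℝ} (hw : IsA1 w) (hq : 0 ≤ q)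
    (hqp : q < p) : ∃ C : ℝ≥0∞, C ≠ ⊤ ∧ ∀ G : Euc n → ℝ≥0∞, Measurable G → ∀ s : ℝ, 0 < s →
      wMeasure w {x | 2 * (ENNReal.ofReal (s ^ q) * volume (Metric.ball (0 : Euc n) 1)) <
        ballMax (fun z => G z ^ q) x} ≤
      C * ENNReal.ofReal (s ^ (-p)) * weakNorm (wMeasure w) p G ^ p := by
  obtain ⟨A, hA, hweak⟩ := hw.exists_mul_wMeasure_lt_ballMax_le
  obtain ⟨B, hB, hlayer⟩ := exists_setLIntegral_rpow_le (n := n) hq hqp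
  set v := volume (Metric.ball (0 : Euc n) 1)
  have hv : v ≠ 0 := (Metric.measure_ball_pos volume _ one_pos).ne'
  have hv' : v ≠ ⊤ := measure_ball_lt_top.ne
  refine ⟨v⁻¹ * A * B, by finiteness, fun G hG s hs => ?_⟩
  set W := weakNorm (wMeasure w) p G
  set Λ := ENNReal.ofReal (s ^ q) * v with hΛ
  set g := {z | ENNReal.ofReal s ≤ G z}.indicator fun z => G z ^ q
  have hset := measurableSet_le measurable_const hG (f := fun _ => ENNReal.ofReal s)
  have hΛ₀ : ENNReal.ofReal (s ^ q) ≠ 0 := (ENNReal.ofReal_pos.2 (by positivity)).ne'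
  have hlevel : Λ * wMeasure w {x | Λ < ballMax g x} ≤
      A * (B * ENNReal.ofReal (s ^ (q - p)) * W ^ p) := by
    refine (hweak _ ((hG.pow_const q).indicator hset) Λ).trans ?_
    rw [lintegral_indicator hset]
    gcongr
    exact hlayer _ G hG s hs
  calc wMeasure w {x | 2 * Λ < ballMax (fun z => G z ^ q) x}
      ≤ wMeasure w {x | Λ < ballMax g x} :=
        measure_mono fun x hx => lt_ballMax_indicator hq hG hs.le rfl hx
    _ ≤ Λ⁻¹ * (A * (B * ENNReal.ofReal (s ^ (q - p)) * W ^ p)) :=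
      (ENNReal.mul_le_iff_le_inv (mul_ne_zero hΛ₀ hv) (by finiteness)).1 hlevel
    _ = v⁻¹ * A * B * ((ENNReal.ofReal (s ^ q))⁻¹ * ENNReal.ofReal (s ^ (q - p))) * W ^ p := by
      rw [hΛ, ENNReal.mul_inv (.inl hΛ₀) (.inr hv)]
      ring
    _ = v⁻¹ * A * B * ENNReal.ofReal (s ^ (-p)) * W ^ p := by
      rw [← ENNReal.ofReal_inv_of_pos (by positivity), ← ENNReal.ofReal_mul (by positivity),
        ← Real.rpow_neg hs.le, ← Real.rpow_add hs, neg_add_eq_sub, sub_sub_cancel_left]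

theorem IsA1.exists_weakNorm_ballMax_rpow_le {w : Euc n → ℝ} (hw : IsA1 w) (hq : 0 < q)
    (hqp : q < p) : ∃ C : ℝ≥0∞, C ≠ ⊤ ∧ ∀ G : Euc n → ℝ≥0∞, Measurable G →
      weakNorm (wMeasure w) p (fun x => ballMax (fun z => G z ^ q) x ^ (1 / q)) ≤
        C * weakNorm (wMeasure w) p G := by
  have hp : 0 < p := hq.trans hqp
  obtain ⟨K, hK, hlevel⟩ := hw.exists_wMeasure_lt_ballMax_rpow_le hq.le hqp
  set v := (volume (Metric.ball (0 : Euc n) 1)).toReal with hv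
  have hv₀ : 0 < v := ENNReal.toReal_pos (Metric.measure_ball_pos volume _ one_pos).ne'
    measure_ball_lt_top.ne
  obtain ⟨ε, hε, hεq⟩ : ∃ ε : ℝ, 0 < ε ∧ ε ^ q * v = 1 / 2 := by
    refine ⟨(2 * v) ^ (-1 / q), by positivity, ?_⟩
    rw [← Real.rpow_mul (by positivity), div_mul_cancel₀ _ hq.ne', Real.rpow_neg_one]
    field_simp
  set C := K * ENNReal.ofReal (ε ^ (-p))
  refine ⟨C ^ (1 / p), ENNReal.rpow_ne_top_of_nonneg (by positivity) (by finiteness),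
    fun G hG => (weakNorm_le_iff hp).2 fun l hl => ?_⟩
  set W := weakNorm (wMeasure w) p G
  have hl_eq : ENNReal.ofReal (l ^ q) =
      2 * (ENNReal.ofReal ((ε * l) ^ q) * volume (Metric.ball (0 : Euc n) 1)) := by
    rw [← ENNReal.ofReal_toReal (measure_ball_lt_top (μ := volume)).ne, ← hv,
      ← ENNReal.ofReal_mul (by positivity), ← ENNReal.ofReal_ofNat,
      ← ENNReal.ofReal_mul zero_le_two, Real.mul_rpow hε.le hl.le]
    congr 1
    linear_combination -2 * l ^ q * hεq
  calc wMeasure w {x | ENNReal.ofReal l < ballMax (fun z => G z ^ q) x ^ (1 / q)}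
      = wMeasure w {x | ENNReal.ofReal (l ^ q) < ballMax (fun z => G z ^ q) x} := by
        simp only [one_div, ENNReal.lt_rpow_inv_iff hq, ENNReal.ofReal_rpow_of_pos hl]
    _ ≤ K * ENNReal.ofReal ((ε * l) ^ (-p)) * W ^ p := by
      rw [hl_eq]
      exact hlevel G hG _ (by positivity)
    _ = ENNReal.ofReal (l ^ (-p)) * (C ^ (1 / p) * W) ^ p := by
      rw [Real.mul_rpow hε.le hl.le, ENNReal.ofReal_mul (by positivity),
        ENNReal.mul_rpow_of_nonneg _ _ hp.le, ← ENNReal.rpow_mul, one_div_mul_cancel hp.ne',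
        ENNReal.rpow_one]
      ring

end weakNorm

/-! ### Convolution with kernels of polynomial decay -/

/-- `k` is continuous and `O((1 + |x|)^(-b))`: the kernels which can be convolved with the
functions in `WeightedIntegrable b`. -/
def HasDecay {n : ℕ} (b : ℝ) (k : Euc n → ℂ) : Prop :=
  Continuous k ∧ ∃ C : ℝ, 0 ≤ C ∧ ∀ x, ‖k x‖ ≤ C * (1 + ‖x‖) ^ (-b)

section HasDecay

variable {n : ℕ} {b t : ℝ} {k l f : Euc n → ℂ}

theorem one_add_norm_sub_rpow_le (hb : 0 ≤ b) (x y : Euc n) :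
    (1 + ‖x - y‖) ^ (-b) ≤ (1 + ‖x‖) ^ b * (1 + ‖y‖) ^ (-b) := by
  have htriangle : 1 + ‖y‖ ≤ (1 + ‖x‖) * (1 + ‖x - y‖) := by
    have := norm_le_norm_add_norm_sub x y
    nlinarith [norm_nonneg x, norm_nonneg (x - y)]
  have hrpow := Real.rpow_le_rpow (by positivity) htriangle hb
  rw [Real.mul_rpow (by positivity) (by positivity)] at hrpow
  rwa [Real.rpow_neg (by positivity), Real.rpow_neg (by positivity), ← div_eq_mul_inv,
    le_div_iff₀ (by positivity), inv_mul_le_iff₀ (by positivity), mul_comm]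

theorem norm_dil_le {C : ℝ} (hk : ∀ x, ‖k x‖ ≤ C * (1 + ‖x‖) ^ (-b)) (ht : 0 < t) (x : Euc n) :
    ‖dil k t x‖ ≤ C * ((t ^ n)⁻¹ * (1 + ‖x‖ / t) ^ (-b)) := by
  rw [dil, norm_smul, Real.norm_of_nonneg (by positivity), mul_left_comm]
  have hscaled := hk (t⁻¹ • x)
  rw [norm_smul, norm_inv, Real.norm_of_nonneg ht.le, inv_mul_eq_div] at hscaled
  gcongr

theorem HasDecay.exists_enorm_dil_le (hk : HasDecay b k) :
    ∃ C : ℝ≥0, ∀ t : ℝ, 0 < t → ∀ x, ‖dil k t x‖ₑ ≤ C * majorant b t x := by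
  obtain ⟨-, C, hC, hbound⟩ := hk
  refine ⟨C.toNNReal, fun t ht x => ?_⟩
  rw [majorant, ← ENNReal.ofReal, ← ENNReal.ofReal_mul hC, ← ofReal_norm]
  exact ENNReal.ofReal_le_ofReal (norm_dil_le hbound ht x)

theorem HasDecay.exists_enorm_le (hk : HasDecay b k) :
    ∃ C : ℝ≥0, ∀ x, ‖k x‖ₑ ≤ C * majorant b 1 x := by
  obtain ⟨C, hbound⟩ := hk.exists_enorm_dil_le
  exact ⟨C, fun x => by simpa only [dil_one] using hbound 1 one_pos x⟩

theorem HasDecay.dil (hb : 0 ≤ b) (hk : HasDecay b k) (ht : 0 < t) : HasDecay b (dil k t) := by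
  obtain ⟨hcont, C, hC, hbound⟩ := hk
  refine ⟨by unfold _root_.dil; fun_prop, C * ((t ^ n)⁻¹ * (min 1 t⁻¹) ^ (-b)), by positivity,
    fun x => (norm_dil_le hbound ht x).trans ?_⟩
  have hmin : min 1 t⁻¹ * (1 + ‖x‖) ≤ 1 + ‖x‖ / t := by
    rw [mul_add, mul_one, div_eq_inv_mul]
    gcongr
    exacts [min_le_left _ _, min_le_right _ _]
  rw [mul_assoc, mul_assoc, ← Real.mul_rpow (by positivity) (by positivity)]
  gcongr C * ((t ^ n)⁻¹ * ?_)
  exact Real.rpow_le_rpow_of_nonpos (by positivity) hmin (neg_nonpos.2 hb)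

theorem hasDecay_schwartzMap (φ : SchwartzMap (Euc n) ℂ) (b : ℝ) : HasDecay b φ := by
  obtain ⟨k, hbk⟩ := exists_nat_ge b
  obtain ⟨S, hS⟩ : ∃ S : ℝ, ∀ x, (1 + ‖x‖) ^ k * ‖φ x‖ ≤ S :=
    ⟨_, fun x => by simpa only [norm_iteratedFDeriv_zero] using
      SchwartzMap.one_add_le_sup_seminorm_apply (𝕜 := ℝ) (m := (k, 0)) le_rfl le_rfl φ x⟩
  refine ⟨φ.continuous, S, le_trans (by positivity) (hS 0), fun x => ?_⟩
  rw [Real.rpow_neg (by positivity), ← div_eq_mul_inv, le_div_iff₀ (by positivity), mul_comm]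
  refine le_trans ?_ (hS x)
  rw [← Real.rpow_natCast]
  gcongr
  exact le_add_of_nonneg_right (norm_nonneg x)

theorem HasDecay.exists_norm_sub_mul_le (hb : 0 ≤ b) (hk : HasDecay b k) :
    ∃ C : ℝ, 0 ≤ C ∧ ∀ (x y : Euc n) (z : ℂ),
      ‖k (x - y) * z‖ ≤ C * (1 + ‖x‖) ^ b * ‖((1 + ‖y‖) ^ (-b) : ℝ) • z‖ := by
  obtain ⟨-, C, hC, hbound⟩ := hk
  refine ⟨C, hC, fun x y z => ?_⟩
  rw [norm_mul, norm_smul, Real.norm_of_nonneg (by positivity), ← mul_assoc, mul_assoc C]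
  gcongr
  exact (hbound _).trans (mul_le_mul_of_nonneg_left (one_add_norm_sub_rpow_le hb x y) hC)

theorem HasDecay.aestronglyMeasurable_conv (hk : HasDecay b k) (hf : WeightedIntegrable b f)
    (x : Euc n) : AEStronglyMeasurable (fun y => k (x - y) * f y) volume :=
  (hk.1.comp (by fun_prop : Continuous fun y => x - y)).aestronglyMeasurable.mul
    hf.aestronglyMeasurable

theorem HasDecay.continuous_conv (hb : 0 ≤ b) (hk : HasDecay b k) (hf : WeightedIntegrable b f) :
    Continuous (conv k f) := by
  obtain ⟨C, hC, hbound⟩ := hk.exists_norm_sub_mul_le hb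
  refine continuous_iff_continuousAt.2 fun x₀ => continuousAt_of_dominated
    (bound := fun y => C * (2 + ‖x₀‖) ^ b * ‖((1 + ‖y‖) ^ (-b) : ℝ) • f y‖)
    (.of_forall fun x => hk.aestronglyMeasurable_conv hf x) ?_ (hf.norm.const_mul _)
    (.of_forall fun y => ?_)
  · filter_upwards [Metric.ball_mem_nhds x₀ one_pos] with x hx
    have hx₀ : 1 + ‖x‖ ≤ 2 + ‖x₀‖ := by
      rw [mem_ball_iff_norm] at hx
      linarith [norm_le_norm_add_norm_sub' x x₀]
    refine .of_forall fun y => (hbound x y _).trans ?_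
    gcongr
  · exact ((hk.1.comp (by fun_prop)).mul continuous_const).continuousAt

theorem WeightedIntegrable.majorantConv_ne_top (hb : 0 ≤ b) (hf : WeightedIntegrable b f)
    (x : Euc n) : majorantConv b 1 (fun y => ‖f y‖ₑ) x ≠ ⊤ := by
  refine ne_top_of_le_ne_top (ENNReal.mul_ne_top ENNReal.ofReal_ne_top
    (weightedIntegrable_iff.1 hf).2) ((lintegral_mono fun y => ?_).trans_eq
      (lintegral_const_mul' (ENNReal.ofReal ((1 + ‖x‖) ^ b)) _ ENNReal.ofReal_ne_top))
  rw [← mul_assoc, ← ENNReal.ofReal_mul (by positivity), majorant]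
  refine mul_le_mul_left (ENNReal.ofReal_le_ofReal ?_) _
  simpa using one_add_norm_sub_rpow_le hb x y

theorem lintegral_enorm_mul_le {τ : ℝ} {C : ℝ≥0} (hk : ∀ x, ‖k x‖ₑ ≤ C * majorant b τ x)
    (F : Euc n → ℝ≥0∞) (x : Euc n) :
    ∫⁻ y, ‖k (x - y)‖ₑ * F y ≤ C * majorantConv b τ F x := by
  rw [majorantConv, ← lintegral_const_mul' _ _ ENNReal.coe_ne_top]
  refine lintegral_mono fun y => ?_
  rw [← mul_assoc]
  gcongr
  exact hk _

theorem enorm_conv_le {τ : ℝ} {C : ℝ≥0} (hk : ∀ x, ‖k x‖ₑ ≤ C * majorant b τ x) (f : Euc n → ℂ)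
    (x : Euc n) : ‖conv k f x‖ₑ ≤ C * majorantConv b τ (fun y => ‖f y‖ₑ) x :=
  (enorm_integral_le_lintegral_enorm _).trans
    (by simpa only [enorm_mul] using lintegral_enorm_mul_le hk (fun y => ‖f y‖ₑ) x)

theorem HasDecay.integrable_prod (hb : n < b) (hk : HasDecay b k) (hl : HasDecay b l)
    (hf : WeightedIntegrable b f) (x : Euc n) :
    Integrable (Function.uncurry fun y z => k (x - y) * (l (y - z) * f z))
      ((volume : Measure (Euc n)).prod volume) := by
  have hb₀ : 0 ≤ b := n.cast_nonneg.trans hb.le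
  have hkc := hk.1
  have hlc := hl.1
  have hmeas : AEStronglyMeasurable (Function.uncurry fun y z => k (x - y) * (l (y - z) * f z))
      ((volume : Measure (Euc n)).prod volume) :=
    .mul (Continuous.aestronglyMeasurable (by fun_prop))
      (.mul (Continuous.aestronglyMeasurable (by fun_prop)) hf.aestronglyMeasurable.comp_snd)
  obtain ⟨C, hC⟩ := hk.exists_enorm_le
  obtain ⟨D, hD⟩ := hl.exists_enorm_le
  set F := fun z => ‖f z‖ₑ
  have hF : AEMeasurable F := hf.aestronglyMeasurable.enorm
  refine ⟨hmeas, ?_⟩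
  rw [HasFiniteIntegral, lintegral_prod _ hmeas.enorm]
  calc ∫⁻ y, ∫⁻ z, ‖k (x - y) * (l (y - z) * f z)‖ₑ
      = ∫⁻ y, ‖k (x - y)‖ₑ * ∫⁻ z, ‖l (y - z)‖ₑ * F z := by
        simp only [enorm_mul, lintegral_const_mul' _ _ enorm_ne_top, F]
    _ ≤ C * majorantConv b 1 (fun y => ∫⁻ z, ‖l (y - z)‖ₑ * F z) x :=
      lintegral_enorm_mul_le hC _ x
    _ ≤ C * majorantConv b 1 (fun y => D * majorantConv b 1 F y) x := by
      gcongr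
      exact majorantConv_mono (lintegral_enorm_mul_le hD F) x
    _ = C * (D * majorantConv b 1 (majorantConv b 1 F) x) := by
      rw [majorantConv_const_mul _ (aemeasurable_majorantConv hF)]
    _ < ⊤ := by
      have hmass := majorantMass_ne_top hb
      have hfin := hf.majorantConv_ne_top hb₀ x
      refine ENNReal.mul_lt_top ENNReal.coe_lt_top (ENNReal.mul_lt_top ENNReal.coe_lt_top
        ((majorantConv_majorantConv_le hb.le one_pos le_rfl hF x).trans_lt ?_))
      finiteness

theorem conv_conv (hb : n < b) (hk : HasDecay b k) (hl : HasDecay b l)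
    (hf : WeightedIntegrable b f) : conv k (conv l f) = conv (conv k l) f := by
  funext x
  have hshift : ∀ z, ∫ y, k (x - y) * l (y - z) = conv k l (x - z) := fun z => by
    rw [conv, ← integral_sub_right_eq_self (fun y => k (x - z - y) * l y) z]
    simp only [sub_sub_sub_cancel_right]
  calc conv k (conv l f) x = ∫ y, ∫ z, k (x - y) * (l (y - z) * f z) := by
        simp only [conv, integral_const_mul]
    _ = ∫ z, ∫ y, k (x - y) * (l (y - z) * f z) :=
      integral_integral_swap (hk.integrable_prod hb hl hf x)
    _ = conv (conv k l) f x := by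
      simp only [← mul_assoc, integral_mul_const, hshift]
      rfl

theorem conv_comm (k l : Euc n → ℂ) : conv k l = conv l k := by
  funext x
  rw [conv, ← integral_sub_left_eq_self _ volume x]
  simp only [sub_sub_cancel, mul_comm, conv]

theorem conv_left_comm (hb : n < b) (hk : HasDecay b k) (hl : HasDecay b l)
    (hf : WeightedIntegrable b f) : conv k (conv l f) = conv l (conv k f) := by
  rw [conv_conv hb hk hl hf, conv_comm k l, conv_conv hb hl hk hf]

end HasDecay

/-! ### The test class and the grand maximal function -/

section testClass

variable {n N : ℕ}

theorem mderiv_rel {P : (Euc n → ℂ) → (Euc n → ℂ) → Prop}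
    (hP : ∀ i f g, P f g → P (pderiv' i f) (pderiv' i g)) (α : Fin n → ℕ) {f g : Euc n → ℂ}
    (h : P f g) : P (mderiv α f) (mderiv α g) := by
  have hiterate : ∀ (i : Fin n) (k : ℕ) (F G : Euc n → ℂ), P F G →
      P ((pderiv' i)^[k] F) ((pderiv' i)^[k] G) := by
    intro i k
    induction k with
    | zero => exact fun F G hFG => hFG
    | succ _ ih => exact fun F G hFG => ih _ _ (hP i F G hFG)
  unfold mderiv
  induction List.finRange n with
  | nil => exact h
  | cons i l ih => exact hiterate i (α i) _ _ ih

theorem mderiv_zero (f : Euc n → ℂ) : mderiv 0 f = f := by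
  unfold mderiv
  induction List.finRange n with
  | nil => rfl
  | cons i l ih => simpa using ih

theorem pderiv'_smul_comp_sub (i : Fin n) (f : Euc n → ℂ) (c : ℝ) (h : Euc n) :
    pderiv' i (fun x => c • f (x - h)) = fun x => c • pderiv' i f (x - h) := by
  funext x
  have hderiv : fderiv ℝ (fun x => c • f (x - h)) x = c • fderiv ℝ f (x - h) := by
    rw [← fderiv_comp_sub]
    exact congrFun (fderiv_const_smul_field (𝕜 := ℝ) c) x
  rw [pderiv', hderiv]
  rfl

theorem mderiv_smul_comp_sub (α : Fin n → ℕ) (f : Euc n → ℂ) (c : ℝ) (h : Euc n) :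
    mderiv α (fun x => c • f (x - h)) = fun x => c • mderiv α f (x - h) :=
  mderiv_rel (P := fun f g => g = fun x => c • f (x - h))
    (fun i f _ hg => hg ▸ pderiv'_smul_comp_sub i f c h) α rfl

theorem exists_mderiv_eq_schwartzMap (α : Fin n → ℕ) (φ : SchwartzMap (Euc n) ℂ) :
    ∃ ψ : SchwartzMap (Euc n) ℂ, mderiv α φ = ψ :=
  mderiv_rel (P := fun f _ => ∃ ψ : SchwartzMap (Euc n) ℂ, f = ψ)
    (fun i _ _ ⟨ψ, hψ⟩ => ⟨LineDeriv.lineDerivOp (EuclideanSpace.single i (1 : ℝ)) ψ, hψ ▸ rfl⟩)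
    α (g := φ) ⟨φ, rfl⟩

theorem exists_one_add_norm_pow_mul_mderiv_le (k : ℕ) (α : Fin n → ℕ) (φ : SchwartzMap (Euc n) ℂ) :
    ∃ B : ℝ, 0 ≤ B ∧ ∀ x, (1 + ‖x‖) ^ k * ‖mderiv α φ x‖ ≤ B := by
  obtain ⟨ψ, hψ⟩ := exists_mderiv_eq_schwartzMap α φ
  obtain ⟨-, B, hB, hbound⟩ := hasDecay_schwartzMap ψ k
  refine ⟨B, hB, fun x => ?_⟩
  have hx := hbound x
  rwa [Real.rpow_neg (by positivity), Real.rpow_natCast, ← div_eq_mul_inv,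
    le_div_iff₀ (by positivity), mul_comm, ← hψ] at hx

theorem exists_smul_inTestClass (N : ℕ) (φ : SchwartzMap (Euc n) ℂ) :
    ∃ c : ℝ, 0 < c ∧ inTestClass N (c • φ) := by
  choose B hB₀ hB using fun α => exists_one_add_norm_pow_mul_mderiv_le (N + n + 1) α φ
  have hfin : {α : Fin n → ℕ | ∑ i, α i ≤ N + 1}.Finite :=
    (Set.finite_Iic fun _ : Fin n => N + 1).subset fun α hα i =>
      (Finset.single_le_sum (fun _ _ => Nat.zero_le _) (Finset.mem_univ i)).trans hα
  set S := ∑ α ∈ hfin.toFinset, B α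
  have hS₀ : 0 ≤ S := Finset.sum_nonneg fun α _ => hB₀ α
  refine ⟨(1 + S)⁻¹, by positivity, fun x α hα => ?_⟩
  have hBS : B α ≤ S := Finset.single_le_sum (fun α _ => hB₀ α) (hfin.mem_toFinset.2 hα)
  have hsmul : mderiv α ⇑((1 + S)⁻¹ • φ) x = (1 + S)⁻¹ • mderiv α φ x := by
    have h := congrFun (mderiv_smul_comp_sub α φ (1 + S)⁻¹ 0) x
    simp only [sub_zero] at h
    exact h
  rw [hsmul, norm_smul, Real.norm_of_nonneg (by positivity), mul_left_comm, inv_mul_le_one₀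
    (by positivity)]
  linarith [hB α x]

theorem inTestClass.translate {φ : SchwartzMap (Euc n) ℂ} (hφ : inTestClass N φ) {h : Euc n}
    (hh : ‖h‖ ≤ 1) : inTestClass N (((2 : ℝ) ^ (N + n + 1))⁻¹ • φ.compSubConstCLM ℝ h) := by
  intro x α hα
  set c := ((2 : ℝ) ^ (N + n + 1))⁻¹ with hc
  have hmderiv : mderiv α ⇑(c • φ.compSubConstCLM ℝ h) x = c • mderiv α φ (x - h) :=
    congrFun (mderiv_smul_comp_sub α φ c h) x
  have hx : 1 + ‖x‖ ≤ 2 * (1 + ‖x - h‖) := by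
    linarith [norm_le_norm_add_norm_sub' x h, norm_nonneg (x - h)]
  calc (1 + ‖x‖) ^ (N + n + 1) * ‖mderiv α ⇑(c • φ.compSubConstCLM ℝ h) x‖
      ≤ (2 * (1 + ‖x - h‖)) ^ (N + n + 1) * (c * ‖mderiv α φ (x - h)‖) := by
        rw [hmderiv, norm_smul, Real.norm_of_nonneg (by positivity)]
        gcongr
    _ = (1 + ‖x - h‖) ^ (N + n + 1) * ‖mderiv α φ (x - h)‖ := by
      rw [mul_pow, hc]
      field_simp
    _ ≤ 1 := hφ _ _ hα

theorem inTestClass.norm_le {φ : SchwartzMap (Euc n) ℂ} (hφ : inTestClass N φ) (x : Euc n) :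
    ‖φ x‖ ≤ (1 + ‖x‖) ^ (-(N + n + 1) : ℝ) := by
  have hx := hφ x 0 (by simp)
  rw [mderiv_zero] at hx
  rw [Real.rpow_neg (by positivity), ← one_div, le_div_iff₀ (by positivity), mul_comm]
  exact_mod_cast hx

theorem inTestClass.enorm_dil_le {φ : SchwartzMap (Euc n) ℂ} (hφ : inTestClass N φ) {b t : ℝ}
    (hb : b ≤ N + n + 1) (ht : 0 < t) (x : Euc n) : ‖dil φ t x‖ₑ ≤ majorant b t x := by
  refine le_trans ?_ (majorant_anti hb ht x)
  rw [majorant, ← ofReal_norm]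
  have hdil := norm_dil_le (C := 1) (by simpa only [one_mul] using hφ.norm_le) ht x
  rw [one_mul] at hdil
  exact ENNReal.ofReal_le_ofReal hdil

theorem enorm_conv_dil_le_grandMax {φ : SchwartzMap (Euc n) ℂ} (hφ : inTestClass N φ) {t : ℝ}
    (ht : 0 < t) (f : Euc n → ℂ) (x : Euc n) : ‖conv (dil φ t) f x‖ₑ ≤ grandMax N f x :=
  le_iSup₂_of_le φ hφ (le_iSup₂_of_le t ht le_rfl)

-- `(φ_t * f)(u)` equals `(ψ_t * f)(z)` for the translate `ψ` of `φ` by `(z - u) / t`.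
theorem enorm_conv_dil_le_mul_grandMax {φ : SchwartzMap (Euc n) ℂ} {c : ℝ} (hc : 0 < c)
    (hφ : inTestClass N (c • φ)) {t : ℝ} (ht : 0 < t) (f : Euc n → ℂ) {u z : Euc n}
    (huz : ‖z - u‖ ≤ t) :
    ‖conv (dil φ t) f u‖ₑ ≤ ENNReal.ofReal (2 ^ (N + n + 1) / c) * grandMax N f z := by
  set h := t⁻¹ • (z - u) with hh
  have hh₁ : ‖h‖ ≤ 1 := by
    rwa [hh, norm_smul, norm_inv, Real.norm_of_nonneg ht.le, inv_mul_le_one₀ ht]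
  set ψ := ((2 : ℝ) ^ (N + n + 1))⁻¹ • (c • φ).compSubConstCLM ℝ h
  have hψ : ∀ v, ψ v = (c / 2 ^ (N + n + 1) : ℝ) • φ (v - h) := fun v => by
    rw [div_eq_inv_mul, mul_smul]
    rfl
  have hdil : ∀ y, dil φ t (u - y) = (2 ^ (N + n + 1) / c : ℝ) • dil ψ t (z - y) := fun y => by
    have harg : t⁻¹ • (z - y) - h = t⁻¹ • (u - y) := by
      rw [hh, ← smul_sub, sub_sub_sub_cancel_left]
    rw [dil, dil, hψ, harg, smul_comm, smul_smul (2 ^ (N + n + 1) / c : ℝ),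
      div_mul_div_cancel₀ hc.ne', div_self (by positivity), one_smul]
  have hconv : conv (dil φ t) f u = (2 ^ (N + n + 1) / c : ℝ) • conv (dil ψ t) f z := by
    simp only [conv, hdil, smul_mul_assoc, integral_smul]
  rw [hconv, enorm_smul, Real.enorm_of_nonneg (by positivity)]
  gcongr
  exact enorm_conv_dil_le_grandMax (hφ.translate hh₁) ht f z

theorem measurable_grandMax {b : ℝ} (hb : 0 ≤ b) {f : Euc n → ℂ} (hf : WeightedIntegrable b f) :
    Measurable (grandMax N f) := by
  refine LowerSemicontinuous.measurable (lowerSemicontinuous_iSup fun φ =>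
    lowerSemicontinuous_iSup fun _ => lowerSemicontinuous_iSup fun t =>
      lowerSemicontinuous_iSup fun ht => Continuous.lowerSemicontinuous ?_)
  exact (((hasDecay_schwartzMap φ b).dil hb ht).continuous_conv hb hf).enorm

end testClass

/-! ### The reproducing formula -/

section reproducing

variable {n : ℕ} {δ : ℝ}

theorem conv_dil (k l : Euc n → ℂ) {t : ℝ} (ht : 0 < t) :
    conv (dil k t) (dil l t) = dil (conv k l) t := by
  funext x
  have hpoint : ∀ y, dil k t (x - y) * dil l t y =
      ((t ^ n)⁻¹ * (t ^ n)⁻¹ : ℝ) • (k (t⁻¹ • x - t⁻¹ • y) * l (t⁻¹ • y)) := fun y => by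
    rw [dil, dil, smul_mul_smul_comm, ← smul_sub]
  have hsubst := Measure.integral_comp_inv_smul (volume : Measure (Euc n))
    (fun y => k (t⁻¹ • x - y) * l y) t
  rw [finrank_euclideanSpace, Fintype.card_fin, abs_of_pos (by positivity)] at hsubst
  simp only [conv, hpoint, integral_smul]
  rw [hsubst, smul_smul, mul_assoc, inv_mul_cancel₀ (by positivity), mul_one, dil, conv]

theorem conv_fourierInv {m : Euc n → ℂ} (hm : Integrable m) (χ : SchwartzMap (Euc n) ℂ) :
    conv (𝓕⁻ m) (𝓕⁻ χ : SchwartzMap (Euc n) ℂ) = 𝓕⁻ fun ξ => m ξ * χ ξ := by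
  funext x
  set η : SchwartzMap (Euc n) ℂ := 𝓕⁻ χ
  have hη : 𝓕 (η : Euc n → ℂ) = χ := by
    rw [← SchwartzMap.fourier_coe, FourierTransform.fourier_fourierInv_eq]
  set g : Euc n → ℂ := fun ξ => 𝐞 (inner ℝ ξ x) • m ξ with hg
  have hg_int : Integrable g := by
    have hchar : Continuous fun ξ : Euc n => 𝐞 (inner ℝ ξ x) :=
      Real.continuous_fourierChar.comp (continuous_id.inner continuous_const)
    exact hm.norm.mono' (hchar.aestronglyMeasurable.smul hm.aestronglyMeasurable)
      (.of_forall fun ξ => (Circle.norm_smul _ _).le)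
  have htranslate : ∀ y, 𝓕 g y = 𝓕⁻ m (x - y) := fun y => by
    rw [Real.fourier_eq, Real.fourierInv_eq]
    refine integral_congr_ae (.of_forall fun ξ => ?_)
    simp only [hg]
    rw [smul_smul, ← AddChar.map_add_eq_mul, inner_sub_right, neg_add_eq_sub]
  calc conv (𝓕⁻ m) η x = ∫ y, 𝓕 g y • η y := by simp only [conv, htranslate, smul_eq_mul]
    _ = ∫ ξ, g ξ • 𝓕 (η : Euc n → ℂ) ξ := by
      simpa using! VectorFourier.integral_fourierIntegral_smul_eq_flip (L := innerₗ (Euc n))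
        Real.continuous_fourierChar continuous_inner hg_int η.integrable
    _ = 𝓕⁻ (fun ξ => m ξ * χ ξ) x := by
      simp only [hη, Real.fourierInv_eq, hg, smul_eq_mul, smul_mul_assoc]

theorem exists_schwartzMap_eq_one_on_closedBall (n : ℕ) :
    ∃ χ : SchwartzMap (Euc n) ℂ, ∀ ξ, ‖ξ‖ ≤ 1 → χ ξ = 1 := by
  let bump : ContDiffBump (0 : Euc n) := ⟨1, 2, one_pos, one_lt_two⟩
  have hsupp : HasCompactSupport fun x => Complex.ofReal (bump x) :=
    bump.hasCompactSupport.comp_left Complex.ofReal_zero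
  refine ⟨hsupp.toSchwartzMap (Complex.ofRealCLM.contDiff.comp bump.contDiff), fun ξ hξ => ?_⟩
  have hone : bump ξ = 1 := bump.one_of_mem_closedBall (by simpa using hξ)
  exact (congrArg Complex.ofReal hone).trans Complex.ofReal_one

theorem exists_conv_brKernel_eq (n : ℕ) (hδ : 0 < δ) :
    ∃ η : SchwartzMap (Euc n) ℂ, conv (brKernel n δ) η = brKernel n δ := by
  obtain ⟨χ, hχ⟩ := exists_schwartzMap_eq_one_on_closedBall n
  have hcont : Continuous fun ξ : Euc n => ((1 - ‖ξ‖ ^ 2) ⊔ 0) ^ δ :=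
    Continuous.rpow_const (by fun_prop) fun ξ => Or.inr hδ.le
  have hsupp : HasCompactSupport fun ξ : Euc n => ((1 - ‖ξ‖ ^ 2) ⊔ 0) ^ δ :=
    hasCompactSupport_rpow_one_sub hδ.ne' (isCompact_closedBall (0 : Euc n) 1) fun ξ hξ =>
      mem_closedBall_zero_iff.2 ((sq_le_one_iff₀ (norm_nonneg ξ)).1 hξ)
  have hint : Integrable fun ξ : Euc n => Complex.ofReal (((1 - ‖ξ‖ ^ 2) ⊔ 0) ^ δ) :=
    (hcont.integrable_of_hasCompactSupport hsupp).ofReal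
  refine ⟨𝓕⁻ χ, (conv_fourierInv hint χ).trans (congrArg _ (funext fun ξ => ?_))⟩
  rcases le_or_gt ‖ξ‖ 1 with hξ | hξ
  · rw [hχ ξ hξ, mul_one]
  · rw [max_eq_right (by nlinarith), Real.zero_rpow hδ.ne', Complex.ofReal_zero, zero_mul]

end reproducing

/-! ### The pointwise estimate -/

section pointwise

variable {n N : ℕ} {a b q s τ : ℝ} {k l K g : Euc n → ℂ}

theorem HasDecay.mono (hK : HasDecay a K) (hba : b ≤ a) : HasDecay b K := by
  obtain ⟨hcont, C, hC, hbound⟩ := hK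
  refine ⟨hcont, C, hC, fun x => (hbound x).trans ?_⟩
  gcongr
  exact le_add_of_nonneg_right (norm_nonneg x)

theorem enorm_conv_conv_le (hb : n ≤ b) (hs : 0 < s) (hsτ : s ≤ τ) {C D : ℝ≥0}
    (hk : ∀ x, ‖k x‖ₑ ≤ C * majorant b s x) (hl : ∀ x, ‖l x‖ₑ ≤ D * majorant b τ x)
    (hg : AEMeasurable g) (x : Euc n) :
    ‖conv k (conv l g) x‖ₑ ≤ C * (D * (ENNReal.ofReal (2 ^ b) * (2 * majorantMass n b) *
      majorantConv b τ (fun y => ‖g y‖ₑ) x)) := by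
  refine (enorm_conv_le hk _ x).trans ?_
  gcongr
  refine (majorantConv_mono (enorm_conv_le hl g) x).trans ?_
  rw [majorantConv_const_mul _ (aemeasurable_majorantConv hg.enorm)]
  gcongr
  exact majorantConv_majorantConv_le hb hs hsτ hg.enorm x

-- At scales above `τ` the averages of `f` are taken first.
theorem exists_enorm_conv_dil_conv_dil_le_of_ge (hK : HasDecay a K) (hq₀ : 0 < q) (hq₁ : q ≤ 1)
    (hb : n / q < b) (hba : b ≤ a) :
    ∃ C : ℝ≥0∞, C ≠ ⊤ ∧ ∀ τ t : ℝ, 0 < τ → τ ≤ t → ∀ f, WeightedIntegrable a f →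
      ∀ (φ : SchwartzMap (Euc n) ℂ) (G : Euc n → ℝ≥0∞), Measurable G →
        (∀ u z, ‖z - u‖ ≤ t → ‖conv (dil φ t) f u‖ₑ ≤ G z) → ∀ x,
          ‖conv (dil φ t) (conv (dil K τ) f) x‖ₑ ≤
            C * ballMax (fun z => G z ^ q) x ^ (1 / q) := by
  have hna : n < a := ((le_div_self n.cast_nonneg hq₀ hq₁).trans_lt hb).trans_le hba
  have ha₀ : 0 ≤ a := n.cast_nonneg.trans hna.le
  obtain ⟨C₀, hC₀, hballMax⟩ := exists_majorantConv_le_ballMax_rpow hq₀ hq₁ hb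
  obtain ⟨D, hD⟩ := (hK.mono hba).exists_enorm_dil_le
  refine ⟨D * C₀, by finiteness, fun τ t hτ hτt f hf φ G hG hφG x => ?_⟩
  have hφ : HasDecay a (dil φ t) := (hasDecay_schwartzMap φ a).dil ha₀ (hτ.trans_le hτt)
  rw [conv_left_comm hna hφ (hK.dil ha₀ hτ) hf, mul_assoc]
  refine (enorm_conv_le (hD τ hτ) _ x).trans ?_
  gcongr
  exact hballMax τ t hτ hτt _ G hG hφG x

-- At scales `s` below `τ` the kernel `k * K_τ` is absorbed by the majorant at scale `τ`.
theorem exists_enorm_conv_conv_dil_le_of_le (hK : HasDecay a K) {η : SchwartzMap (Euc n) ℂ}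
    (hη : conv K η = K) (hq₀ : 0 < q) (hq₁ : q ≤ 1) (hb : n / q < b) (hba : b ≤ a) :
    ∃ C : ℝ≥0∞, C ≠ ⊤ ∧ ∀ s τ : ℝ, 0 < s → s ≤ τ → ∀ f, WeightedIntegrable a f →
      ∀ (k : Euc n → ℂ) (G : Euc n → ℝ≥0∞), (∀ x, ‖k x‖ₑ ≤ majorant b s x) → Measurable G →
        (∀ u z, ‖z - u‖ ≤ τ → ‖conv (dil η τ) f u‖ₑ ≤ G z) → ∀ x,
          ‖conv k (conv (dil K τ) f) x‖ₑ ≤ C * ballMax (fun z => G z ^ q) x ^ (1 / q) := by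
  have hnb : n < b := (le_div_self n.cast_nonneg hq₀ hq₁).trans_lt hb
  have hna := hnb.trans_le hba
  have ha₀ : 0 ≤ a := n.cast_nonneg.trans hna.le
  obtain ⟨C₀, hC₀, hballMax⟩ := exists_majorantConv_le_ballMax_rpow hq₀ hq₁ hb
  obtain ⟨D, hD⟩ := (hK.mono hba).exists_enorm_dil_le
  set A := ENNReal.ofReal (2 ^ b) * (2 * majorantMass n b)
  have hA : A ≠ ⊤ := by
    have hmass := majorantMass_ne_top hnb
    finiteness
  refine ⟨D * (A * C₀), by finiteness, fun s τ hs hsτ f hf k G hk hG hηG x => ?_⟩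
  have hτ := hs.trans_le hsτ
  have hηdecay : HasDecay a (dil η τ) := (hasDecay_schwartzMap η a).dil ha₀ hτ
  have hreproduce : conv (dil K τ) f = conv (dil K τ) (conv (dil η τ) f) := by
    rw [conv_conv hna (hK.dil ha₀ hτ) hηdecay hf, conv_dil K η hτ, hη]
  have hk₁ : ∀ x, ‖k x‖ₑ ≤ (1 : ℝ≥0) * majorant b s x := by simpa using hk
  have hmeas := (hηdecay.continuous_conv ha₀ hf).aemeasurable (μ := volume)
  calc ‖conv k (conv (dil K τ) f) x‖ₑ
      ≤ D * (A * majorantConv b τ (fun y => ‖conv (dil η τ) f y‖ₑ) x) := by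
        rw [hreproduce]
        simpa using enorm_conv_conv_le hnb.le hs hsτ hk₁ (hD τ hτ) hmeas x
    _ ≤ D * (A * (C₀ * ballMax (fun z => G z ^ q) x ^ (1 / q))) := by
      gcongr
      exact hballMax τ τ hτ le_rfl _ G hG hηG x
    _ = D * (A * C₀) * ballMax (fun z => G z ^ q) x ^ (1 / q) := by ring

theorem exists_grandMax_conv_dil_le (hK : HasDecay a K) {η : SchwartzMap (Euc n) ℂ}
    (hη : conv K η = K) (hq₀ : 0 < q) (hq₁ : q ≤ 1) (hb : n / q < b) (hba : b ≤ a)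
    (hbN : b ≤ N + n + 1) :
    ∃ (C : ℝ≥0∞) (B : ℝ≥0), C ≠ ⊤ ∧ 0 < B ∧ ∀ τ : ℝ, 0 < τ → ∀ f, WeightedIntegrable a f →
      ∀ x, grandMax N (conv (dil K τ) f) x ≤
        C * ballMax (fun z => (B * grandMax N f z) ^ q) x ^ (1 / q) := by
  have ha₀ : 0 ≤ a := by
    have hn : (0 : ℝ) ≤ n / q := by positivity
    linarith
  obtain ⟨C₁, hC₁, hcoarse⟩ := exists_enorm_conv_dil_conv_dil_le_of_ge hK hq₀ hq₁ hb hba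
  obtain ⟨C₂, hC₂, hfine⟩ := exists_enorm_conv_conv_dil_le_of_le hK hη hq₀ hq₁ hb hba
  obtain ⟨c, hc, hηc⟩ := exists_smul_inTestClass N η
  set P : ℝ := 2 ^ (N + n + 1)
  have hP : 0 < P := by positivity
  refine ⟨max C₁ C₂, (max P (P / c)).toNNReal, by finiteness,
    Real.toNNReal_pos.2 (lt_max_of_lt_left hP), fun τ hτ f hf x => ?_⟩
  set G : Euc n → ℝ≥0∞ := fun z => (max P (P / c)).toNNReal * grandMax N f z
  have hG : Measurable G := (measurable_grandMax ha₀ hf).const_mul _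
  refine iSup₂_le fun φ hφ => iSup₂_le fun t ht => ?_
  rcases le_total τ t with hτt | htτ
  · refine (hcoarse τ t hτ hτt f hf φ G hG (fun u z huz => ?_) x).trans
      (by gcongr; exact le_max_left _ _)
    refine (enorm_conv_dil_le_mul_grandMax one_pos (by rwa [one_smul]) ht f huz).trans ?_
    rw [div_one]
    exact mul_le_mul_left (ENNReal.ofReal_le_ofReal (le_max_left _ _)) _
  · refine (hfine t τ ht htτ f hf _ G (hφ.enorm_dil_le hbN ht) hG (fun u z huz => ?_) x).trans
      (by gcongr; exact le_max_right _ _)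
    refine (enorm_conv_dil_le_mul_grandMax hc hηc hτ f huz).trans ?_
    exact mul_le_mul_left (ENNReal.ofReal_le_ofReal (le_max_right _ _)) _

theorem hasDecay_brKernel {m : ℕ} {δ : ℝ} (hδ : 0 < δ) :
    HasDecay (δ + m / 2 + 1) (brKernel (m + 1) δ) := by
  obtain ⟨C, hC, hbound⟩ := exists_norm_brKernel_le (m := m) hδ
  exact ⟨continuous_brKernel hδ, C, hC.le, hbound⟩

theorem exists_grandMax_brOp_le {m : ℕ} {δ : ℝ} (hδ : 0 < δ) (hq₀ : 0 < q) (hq₁ : q ≤ 1)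
    (hb : ((m + 1 : ℕ) : ℝ) / q < b) (hba : b ≤ δ + m / 2 + 1)
    (hbN : b ≤ N + ((m + 1 : ℕ) : ℝ) + 1) :
    ∃ (C : ℝ≥0∞) (B : ℝ≥0), C ≠ ⊤ ∧ 0 < B ∧ ∀ R : ℝ, 0 < R → ∀ f,
      WeightedIntegrable (δ + m / 2 + 1) f → ∀ x, grandMax N (brOp (m + 1) δ R f) x ≤
        C * ballMax (fun z => (B * grandMax N f z) ^ q) x ^ (1 / q) := by
  obtain ⟨η, hη⟩ := exists_conv_brKernel_eq (m + 1) hδ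
  obtain ⟨C, B, hC, hB, hbound⟩ :=
    exists_grandMax_conv_dil_le (N := N) (hasDecay_brKernel hδ) hη hq₀ hq₁ hb hba hbN
  exact ⟨C, B, hC, hB, fun R hR => hbound R⁻¹ (inv_pos.2 hR)⟩

end pointwise

/-! ### The critical index of an `A₁` weight -/

theorem volume_real_cube {n : ℕ} (x : Euc n) {r : ℝ} (hr : 0 ≤ r) :
    volume.real (cube x r) = r ^ n := by
  have hIcc : cube x r = WithLp.ofLp ⁻¹' Icc (fun i => x i - r / 2) (fun i => x i + r / 2) := by
    ext y
    simp only [cube, Set.mem_ofPred_eq, abs_sub_le_iff, sub_le_iff_le_add, mem_preimage, mem_Icc,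
      Pi.le_def, ← forall_and]
    exact forall_congr' fun i => by rw [and_comm, add_comm (r / 2) (x i), add_comm (r / 2) (y i)]
  rw [Measure.real, hIcc, (PiLp.volume_preserving_ofLp (Fin n)).measure_preimage
    measurableSet_Icc.nullMeasurableSet, Real.volume_Icc_pi_toReal fun i => by simp only; linarith]
  simp

theorem setIntegral_inv_le_of_le {α : Type*} [MeasurableSpace α] {μ : Measure α} {s : Set α}
    (hs : μ s ≠ ⊤) {w : α → ℝ} (hw : ∀ x, 0 ≤ w x) {c : ℝ} (hc : 0 < c)
    (hcw : ∀ᵐ x ∂μ.restrict s, c ≤ w x) : ∫ x in s, (w x)⁻¹ ∂μ ≤ c⁻¹ * μ.real s := by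
  calc ∫ x in s, (w x)⁻¹ ∂μ ≤ ∫ _ in s, c⁻¹ ∂μ :=
        integral_mono_of_nonneg (.of_forall fun x => inv_nonneg.2 (hw x))
          (integrableOn_const hs) (hcw.mono fun x hx => inv_anti₀ hc hx)
    _ = c⁻¹ * μ.real s := by rw [setIntegral_const, smul_eq_mul, mul_comm]

theorem IsA1.isAq_two {n : ℕ} {w : Euc n → ℝ} (hw : IsA1 w) : IsAq w 2 := by
  obtain ⟨C, hC, hA1⟩ := hw.2.2
  refine ⟨hw.1, hw.2.1, C, hC, fun x r hr => ?_⟩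
  set c := essInf w (volume.restrict (cube x r))
  have hdual : ((∫ y in cube x r, w y ^ (-1 / ((2 : ℝ) - 1))) / r ^ n) ^ ((2 : ℝ) - 1) =
      (∫ y in cube x r, (w y)⁻¹) / r ^ n := by
    norm_num [Real.rpow_neg_one]
  have hdual₀ : 0 ≤ (∫ y in cube x r, (w y)⁻¹) / r ^ n :=
    div_nonneg (integral_nonneg fun y => inv_nonneg.2 (hw.1 y)) (by positivity)
  rw [hdual]
  rcases le_or_gt c 0 with hc | hc
  · have havg : (∫ y in cube x r, w y) / r ^ n ≤ 0 :=
      (hA1 x r hr).trans (mul_nonpos_of_nonneg_of_nonpos hC.le hc)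
    exact (mul_nonpos_of_nonpos_of_nonneg havg hdual₀).trans hC.le
  · have hle : ∀ᵐ y ∂volume.restrict (cube x r), c ≤ w y :=
      (ae_restrict_iff' (isClosed_cube x r).measurableSet).2 (hw.ae_essInf_cube_le x r)
    have hinv : (∫ y in cube x r, (w y)⁻¹) / r ^ n ≤ c⁻¹ := by
      rw [div_le_iff₀ (by positivity), ← volume_real_cube x hr.le]
      exact setIntegral_inv_le_of_le (isCompact_cube x r).measure_lt_top.ne hw.1 hc hle
    calc _ ≤ C * c * c⁻¹ := mul_le_mul (hA1 x r hr) hinv hdual₀ (by positivity)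
      _ = C := mul_inv_cancel_right₀ hc.ne' C

theorem IsA1.one_le_criticalIndex {n : ℕ} {w : Euc n → ℝ} (hw : IsA1 w) : 1 ≤ criticalIndex w :=
  le_csInf ⟨2, one_lt_two, hw.isAq_two⟩ fun _ hq => hq.1.le

theorem IsA1.div_lt_floor_add {n : ℕ} {w : Euc n → ℝ} (hw : IsA1 w) {p : ℝ} (hp : 0 < p) :
    (n : ℝ) / p < ⌊(n : ℝ) * (criticalIndex w / p - 1)⌋.toNat + n + 1 := by
  have hfloor : (n : ℝ) * (criticalIndex w / p - 1) <
      ⌊(n : ℝ) * (criticalIndex w / p - 1)⌋.toNat + 1 := by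
    refine (Int.lt_floor_add_one _).trans_le ?_
    gcongr
    exact_mod_cast Int.self_le_toNat _
  have hindex : (n : ℝ) / p ≤ n * (criticalIndex w / p) := by
    rw [← mul_div_assoc]
    gcongr
    exact le_mul_of_one_le_right n.cast_nonneg hw.one_le_criticalIndex
  linarith

/-! ### The bound -/

theorem grandMax_eq_zero {n N : ℕ} {f : Euc n → ℂ} (hf : ∀ᵐ x, f x = 0) (x : Euc n) :
    grandMax N f x = 0 := by
  simp only [grandMax, ENNReal.iSup_eq_zero]
  intro φ _ t _
  have hint : ∫ y, dil φ t (x - y) * f y = 0 :=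
    integral_eq_zero_of_ae (hf.mono fun y hy => by simp [hy])
  simp [hint]

theorem whNorm_eq_zero {n N : ℕ} {μ : Measure (Euc n)} {p : ℝ} (hp : 0 < p) {f : Euc n → ℂ}
    (hf : ∀ᵐ x, f x = 0) : whNorm N μ p f = 0 := by
  simp [whNorm, weakNorm, grandMax_eq_zero hf, hp]

theorem brOp_dim_zero (δ R : ℝ) (f : Euc 0 → ℂ) : brOp 0 δ R f = f := by
  have hK : brKernel 0 δ = fun _ => 1 := by
    funext y
    rw [brKernel, Real.fourierInv_eq, volume_euclideanSpace_eq_dirac, integral_dirac]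
    simp
  funext x
  rw [brOp, volume_euclideanSpace_eq_dirac, integral_dirac, hK, Subsingleton.elim x 0]
  simp [dil]

theorem exists_whNorm_brOp_succ_le {m N : ℕ} {p q b δ : ℝ} {w : Euc (m + 1) → ℝ} (hδ : 0 < δ)
    (hq₀ : 0 < q) (hq₁ : q ≤ 1) (hqp : q < p) (hb : ((m + 1 : ℕ) : ℝ) / q < b)
    (hba : b ≤ δ + m / 2 + 1) (hbN : b ≤ N + ((m + 1 : ℕ) : ℝ) + 1) (hw : IsA1 w) :
    ∃ C : ℝ≥0, 0 < C ∧ ∀ R : ℝ, 0 < R → ∀ f : Euc (m + 1) → ℂ,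
      whNorm N (wMeasure w) p (brOp (m + 1) δ R f) ≤ C * whNorm N (wMeasure w) p f := by
  have hp : 0 < p := hq₀.trans hqp
  obtain ⟨C₁, B, hC₁, hB, hpointwise⟩ := exists_grandMax_brOp_le (N := N) hδ hq₀ hq₁ hb hba hbN
  obtain ⟨C₂, hC₂, hballMax⟩ := hw.exists_weakNorm_ballMax_rpow_le hq₀ hqp
  lift C₁ to ℝ≥0 using hC₁
  lift C₂ to ℝ≥0 using hC₂
  refine ⟨(C₁ + 1) * ((C₂ + 1) * B), by positivity, fun R hR f => ?_⟩
  by_cases hzero : ∀ᵐ x, brOp (m + 1) δ R f x = 0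
  · simp [whNorm_eq_zero hp hzero]
  have hf := weightedIntegrable_of_not_ae_brOp_eq_zero hδ hR hzero
  set G : Euc (m + 1) → ℝ≥0∞ := fun z => B * grandMax N f z
  have hG : Measurable G := (measurable_grandMax (by positivity) hf).const_mul _
  calc whNorm N (wMeasure w) p (brOp (m + 1) δ R f)
      ≤ weakNorm (wMeasure w) p
          fun x => (C₁ + 1 : ℝ≥0) * ballMax (fun z => G z ^ q) x ^ (1 / q) :=
        weakNorm_mono hp.le fun x => (hpointwise R hR f hf x).trans (by gcongr; exact le_self_add)
    _ ≤ (C₁ + 1 : ℝ≥0) * weakNorm (wMeasure w) p fun x => ballMax (fun z => G z ^ q) x ^ (1 / q) :=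
      weakNorm_const_mul_le (by positivity) _
    _ ≤ (C₁ + 1 : ℝ≥0) * (C₂ * weakNorm (wMeasure w) p G) := by
      gcongr
      exact hballMax G hG
    _ ≤ (C₁ + 1 : ℝ≥0) * ((C₂ + 1 : ℝ≥0) * (B * whNorm N (wMeasure w) p f)) := by
      gcongr
      exacts [le_self_add, weakNorm_const_mul_le hB _]
    _ = ((C₁ + 1) * ((C₂ + 1) * B) : ℝ≥0) * whNorm N (wMeasure w) p f := by
      push_cast
      ring

theorem bochnerRiesz_weighted_weakHardy_bounded_general {n N : ℕ} {p δ : ℝ} {w : Euc n → ℝ}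
    (hp : 0 < p) (hδ : (n : ℝ) / min p 1 - ((n : ℝ) + 1) / 2 < δ) (hN : (n : ℝ) / p < N + n + 1)
    (hw : IsA1 w) : ∃ C : ℝ≥0, 0 < C ∧ ∀ R : ℝ, 0 < R → ∀ f : Euc n → ℂ,
      whNorm N (wMeasure w) p (brOp n δ R f) ≤ C * whNorm N (wMeasure w) p f := by
  rcases n with _ | m
  · exact ⟨1, one_pos, fun R _ f => by rw [brOp_dim_zero, ENNReal.coe_one, one_mul]⟩
  set n : ℝ := ((m + 1 : ℕ) : ℝ) with hn
  have hnm : n = m + 1 := by rw [hn, Nat.cast_succ]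
  have hn₀ : 0 < n := by positivity
  have hp₁ : 0 < min p 1 := lt_min hp one_pos
  have hnp : n ≤ n / min p 1 := le_div_self hn₀.le hp₁ (min_le_right p 1)
  -- `b` bounds the decay of both the kernel and the test functions.
  set b := min (δ + m / 2 + 1) (N + n + 1)
  have hpb : n / min p 1 < b := by
    refine lt_min (by linarith) ?_
    rcases min_choice p 1 with h | h <;> rw [h]
    · exact hN
    · linarith [N.cast_nonneg (α := ℝ)]
  have hb₀ : 0 < b := (hn₀.trans_le hnp).trans hpb
  obtain ⟨q, hbq, hqp⟩ : ∃ q, n / b < q ∧ q < min p 1 :=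
    exists_between (by rwa [div_lt_comm₀ hb₀ hp₁])
  have hq₀ : 0 < q := (div_pos hn₀ hb₀).trans hbq
  exact exists_whNorm_brOp_succ_le (by linarith [m.cast_nonneg (α := ℝ)]) hq₀
    (hqp.le.trans (min_le_right _ _)) (hqp.trans_le (min_le_left _ _))
    (by rwa [← hn, div_lt_comm₀ hq₀ hb₀]) (min_le_left _ _) (min_le_right _ _) hw

/-- Let `0 < p ≤ 1`, `δ > n/p - (n+1)/2` and `w ∈ A₁`, and suppose that
`δ - (n-1)/2` is not a positive integer. Then there is a constant `C > 0`, independent of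
`f` and `R`, such that for every `0 < R < ∞` and every `f ∈ WH^p_w(ℝⁿ)` one has
`‖T^δ_R f‖_{WH^p_w} ≤ C ‖f‖_{WH^p_w}`. -/
theorem bochnerRiesz_weighted_weakHardy_bounded (n : ℕ) (p δ : ℝ) (w : Euc n → ℝ)
    (hp0 : 0 < p) (hp1 : p ≤ 1)
    (hδ : (n : ℝ) / p - ((n : ℝ) + 1) / 2 < δ)
    (hδ' : ¬∃ m : ℕ, 0 < m ∧ δ - ((n : ℝ) - 1) / 2 = (m : ℝ))
    (hw : IsA1 w) :
    ∃ C : ℝ≥0, 0 < C ∧ ∀ (R : ℝ), 0 < R → ∀ f : Euc n → ℂ,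
      whNorm (⌊(n : ℝ) * (criticalIndex w / p - 1)⌋.toNat) (wMeasure w) p f ≠ ⊤ →
      whNorm (⌊(n : ℝ) * (criticalIndex w / p - 1)⌋.toNat) (wMeasure w) p (brOp n δ R f) ≤
        (C : ℝ≥0∞) * whNorm (⌊(n : ℝ) * (criticalIndex w / p - 1)⌋.toNat) (wMeasure w) p f := by
  obtain ⟨C, hC, hbound⟩ := bochnerRiesz_weighted_weakHardy_bounded_general hp0
    (by rwa [min_eq_left hp1]) (hw.div_lt_floor_add hp0) hw
  exact ⟨C, hC, fun R hR f _ => hbound R hR f⟩
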